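/- arXiv:1106.4870 — 4 statements merged into one kernel-verified Lean document; each statement's English description precedes it below -/
import Mathlib

section
/- Let Q be gratifying in x_1,…,x_n with defining polynomial P, and set A_0 = (Q·(1 − x_1))|_{x_1 = 1} and A_n = (Q·(1 − x_1 x_n))|_{x_1 = 1/x_n}. Then: (i) A_0 is gratifying in x_2,…,x_n, with defining polynomial P' determined by P'(x_2^{−1},…,x_n^{−1}) = P(1, x_2^{−1},…,x_n^{−1}) · ∏_{i=2}^n (1 − x_i^{−1}); (ii) A_n = [P''(x_2^{−1},…,x_{n−1}^{−1}) · ∏_{2≤i≠j≤n−1}(1 − x_i/x_j)] / [∏_{i=2}^{n−1}(1 − x_i) · ∏_{2≤i<j≤n−1}(1 − x_i x_j)], where P'' is the polynomial in x_2,…,x_{n−1} (with coefficients Laurent polynomials in x_n) determined by P''(x_2^{−1},…,x_{n−1}^{−1}) = P(x_n, x_2^{−1},…,x_n^{−1}) · ((1+x_n)^2/x_n) · ∏_{j=2}^{n−1} (1 − 1/(x_n x_j))(1 − x_n/x_j). -/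
open Finset

noncomputable section Stmt9Defs

/-- The field `ℚ(x₂,…,xₙ)` of rational functions in the last `m = n-1`
variables. -/
abbrev FF (m : ℕ) := FractionRing (MvPolynomial (Fin m) ℚ)

/-- The canonical map `ℚ →+* ℚ(x₂,…,xₙ)`. -/
def ψ (m : ℕ) : ℚ →+* FF m :=
  (algebraMap (MvPolynomial (Fin m) ℚ) (FF m)).comp MvPolynomial.C

/-- The variable `x_{i+2}` as an element of `ℚ(x₂,…,xₙ)`. -/
def yy {m : ℕ} (i : Fin m) : FF m :=
  algebraMap (MvPolynomial (Fin m) ℚ) (FF m) (MvPolynomial.X i)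

/-- The variables `x₁,…,xₙ` (`n = m+1`) as elements of `ℚ(x₂,…,xₙ)(x₁)`:
`x₁` is the `RatFunc` variable, the others are constants. -/
def uu {m : ℕ} (i : Fin (m + 1)) : RatFunc (FF m) :=
  Fin.cases RatFunc.X (fun j => RatFunc.C (yy j)) i

/-- A rational function `Q` gratifying in `x₁,…,xₙ` with defining polynomial
`P`, i.e. `Q = ∏_{i≠j}(1-xᵢ/xⱼ)·P(x₁⁻¹,…,xₙ⁻¹) / (∏ᵢ(1-xᵢ)·∏_{i<j}(1-xᵢxⱼ))`,
viewed as an element of `ℚ(x₂,…,xₙ)(x₁)`. -/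
def ratQ {m : ℕ} (P : MvPolynomial (Fin (m + 1)) ℚ) : RatFunc (FF m) :=
  (∏ p ∈ (univ : Finset (Fin (m + 1))).offDiag, (1 - uu p.1 / uu p.2)) *
    MvPolynomial.eval₂ (RatFunc.C.comp (ψ m)) (fun i => (uu i)⁻¹) P /
  ((∏ i : Fin (m + 1), (1 - uu i)) *
    ∏ p ∈ univ.filter (fun p : Fin (m + 1) × Fin (m + 1) => p.1 < p.2),
      (1 - uu p.1 * uu p.2))

/-- `A₀ = (Q·(1-x₁))|_{x₁=1}`, the substitution being performed after reducing
to lowest terms (which is what `RatFunc.eval` does). -/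
def A0 {m : ℕ} (P : MvPolynomial (Fin (m + 1)) ℚ) : FF m :=
  RatFunc.eval (RingHom.id (FF m)) 1 (ratQ P * (1 - RatFunc.X))

/-- `A_r = (Q·(1-x₁x_r))|_{x₁=1/x_r}`, the substitution being performed after
reducing to lowest terms. -/
def Ar {m : ℕ} (P : MvPolynomial (Fin (m + 1)) ℚ) (r : Fin m) : FF m :=
  RatFunc.eval (RingHom.id (FF m)) (yy r)⁻¹ (ratQ P * (1 - RatFunc.X * RatFunc.C (yy r)))

end Stmt9Defs

namespace Stmt9Aux

section Regular

variable {K : Type*} [Field K]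

/-- `f` is regular at `a` with value `v`. -/
def Reg (a : K) (f : RatFunc K) (v : K) : Prop :=
  ∃ p q : Polynomial K, q.eval a ≠ 0 ∧
    f = algebraMap (Polynomial K) (RatFunc K) p / algebraMap (Polynomial K) (RatFunc K) q ∧
    v = p.eval a / q.eval a

lemma aux_ne {a : K} {q : Polynomial K} (h : q.eval a ≠ 0) :
    algebraMap (Polynomial K) (RatFunc K) q ≠ 0 := by
  apply RatFunc.algebraMap_ne_zero
  rintro rfl
  simp at h

lemma Reg.eval_eq {a : K} {f : RatFunc K} {v : K} (h : Reg a f v) :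
    RatFunc.eval (RingHom.id K) a f = v := by
  obtain ⟨p, q, hq, hf, hv⟩ := h
  have hq0 : q ≠ 0 := by rintro rfl; simp at hq
  have h1 := (RatFunc.num_mul_eq_mul_denom_iff (x := f) (p := p) hq0).2 hf
  have h2 : f.denom ∣ q := by
    rw [hf]; exact RatFunc.denom_div_dvd p q
  have h3 : f.denom.eval a ≠ 0 := by
    obtain ⟨c, hc⟩ := h2
    intro h
    apply hq
    rw [hc, Polynomial.eval_mul, h, zero_mul]
  have h4 := congrArg (Polynomial.eval a) h1
  rw [Polynomial.eval_mul, Polynomial.eval_mul] at h4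
  rw [RatFunc.eval, hv]
  change Polynomial.eval a f.num / Polynomial.eval a f.denom = _
  rw [div_eq_div_iff h3 hq, h4]

lemma Reg.poly (a : K) (p : Polynomial K) :
    Reg a (algebraMap (Polynomial K) (RatFunc K) p) (p.eval a) :=
  ⟨p, 1, by simp, by simp, by simp⟩

lemma Reg.C (a c : K) : Reg a (RatFunc.C c) c := by
  simpa using Reg.poly a (Polynomial.C c)

lemma Reg.X (a : K) : Reg a RatFunc.X a := by
  simpa using Reg.poly a Polynomial.X

lemma Reg.one (a : K) : Reg a 1 1 := by
  simpa using Reg.poly a 1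

lemma Reg.mul {a : K} {f g : RatFunc K} {v w : K} (hf : Reg a f v) (hg : Reg a g w) :
    Reg a (f * g) (v * w) := by
  obtain ⟨p, q, hq, rfl, rfl⟩ := hf
  obtain ⟨p', q', hq', rfl, rfl⟩ := hg
  refine ⟨p * p', q * q', by simp [hq, hq'], ?_, ?_⟩
  · rw [map_mul, map_mul, div_mul_div_comm]
  · rw [Polynomial.eval_mul, Polynomial.eval_mul, div_mul_div_comm]

lemma Reg.add {a : K} {f g : RatFunc K} {v w : K} (hf : Reg a f v) (hg : Reg a g w) :
    Reg a (f + g) (v + w) := by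
  obtain ⟨p, q, hq, rfl, rfl⟩ := hf
  obtain ⟨p', q', hq', rfl, rfl⟩ := hg
  refine ⟨p * q' + q * p', q * q', by simp [hq, hq'], ?_, ?_⟩
  · rw [map_mul, map_add, map_mul, map_mul, div_add_div _ _ (aux_ne hq) (aux_ne hq')]
  · simp only [Polynomial.eval_mul, Polynomial.eval_add]
    rw [div_add_div _ _ hq hq']

lemma Reg.sub {a : K} {f g : RatFunc K} {v w : K} (hf : Reg a f v) (hg : Reg a g w) :
    Reg a (f - g) (v - w) := by
  have h := hf.add ((Reg.C a (-1)).mul hg)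
  have e1 : f + RatFunc.C (-1) * g = f - g := by rw [map_neg, map_one]; ring
  have e2 : v + (-1) * w = v - w := by ring
  rwa [e1, e2] at h

lemma Reg.inv {a : K} {f : RatFunc K} {v : K} (hf : Reg a f v) (hv : v ≠ 0) :
    Reg a f⁻¹ v⁻¹ := by
  obtain ⟨p, q, hq, rfl, rfl⟩ := hf
  refine ⟨q, p, ?_, by rw [inv_div], by rw [inv_div]⟩
  intro h
  simp [h] at hv

lemma Reg.div {a : K} {f g : RatFunc K} {v w : K} (hf : Reg a f v) (hg : Reg a g w)
    (hw : w ≠ 0) : Reg a (f / g) (v / w) := by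
  rw [div_eq_mul_inv, div_eq_mul_inv]
  exact hf.mul (hg.inv hw)

lemma Reg.prod {ι : Type*} {a : K} (s : Finset ι) {f : ι → RatFunc K} {v : ι → K}
    (h : ∀ i ∈ s, Reg a (f i) (v i)) : Reg a (∏ i ∈ s, f i) (∏ i ∈ s, v i) := by
  classical
  induction s using Finset.induction_on with
  | empty => simpa using Reg.one a
  | insert i s hi ih =>
    rw [Finset.prod_insert hi, Finset.prod_insert hi]
    exact (h i (Finset.mem_insert_self _ _)).mul
      (ih fun j hj => h j (Finset.mem_insert_of_mem hj))

lemma Reg.eval₂ {σ : Type*} {a : K} (φ : ℚ →+* K) {f : σ → RatFunc K} {v : σ → K}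
    (h : ∀ i, Reg a (f i) (v i)) (P : MvPolynomial σ ℚ) :
    Reg a (MvPolynomial.eval₂ (RatFunc.C.comp φ) f P) (MvPolynomial.eval₂ φ v P) := by
  induction P using MvPolynomial.induction_on with
  | C c =>
    rw [MvPolynomial.eval₂_C, MvPolynomial.eval₂_C]
    exact Reg.C a _
  | add p q hp hq =>
    rw [MvPolynomial.eval₂_add, MvPolynomial.eval₂_add]
    exact hp.add hq
  | mul_X p i hp =>
    rw [MvPolynomial.eval₂_mul, MvPolynomial.eval₂_mul, MvPolynomial.eval₂_X,
      MvPolynomial.eval₂_X]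
    exact hp.mul (h i)

end Regular

section Products

variable {M : Type*} [CommMonoid M]

lemma prod_offDiag_eq {n : ℕ} (f : Fin n → Fin n → M) :
    ∏ p ∈ (univ : Finset (Fin n)).offDiag, f p.1 p.2 =
      ∏ i, ∏ j, if i ≠ j then f i j else 1 := by
  rw [← Fintype.prod_prod_type', ← Finset.prod_filter]
  apply Finset.prod_congr _ (fun _ _ => rfl)
  ext p
  simp

lemma prod_lt_eq {n : ℕ} (f : Fin n → Fin n → M) :
    ∏ p ∈ univ.filter (fun p : Fin n × Fin n => p.1 < p.2), f p.1 p.2 =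
      ∏ i, ∏ j, if i < j then f i j else 1 := by
  rw [← Fintype.prod_prod_type', ← Finset.prod_filter]

lemma prod_offDiag_succ {n : ℕ} (f : Fin (n + 1) → Fin (n + 1) → M) :
    ∏ p ∈ (univ : Finset (Fin (n + 1))).offDiag, f p.1 p.2 =
      (∏ j : Fin n, (f 0 j.succ * f j.succ 0)) *
        ∏ p ∈ (univ : Finset (Fin n)).offDiag, f p.1.succ p.2.succ := by
  rw [prod_offDiag_eq, prod_offDiag_eq (fun i j => f (Fin.succ i) (Fin.succ j))]
  simp only [Fin.prod_univ_succ, Finset.prod_mul_distrib]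
  simp [Fin.succ_ne_zero, (Fin.succ_ne_zero _).symm]
  ac_rfl

lemma prod_offDiag_castSucc {n : ℕ} (f : Fin (n + 1) → Fin (n + 1) → M) :
    ∏ p ∈ (univ : Finset (Fin (n + 1))).offDiag, f p.1 p.2 =
      (∏ j : Fin n, (f j.castSucc (Fin.last n) * f (Fin.last n) j.castSucc)) *
        ∏ p ∈ (univ : Finset (Fin n)).offDiag, f p.1.castSucc p.2.castSucc := by
  rw [prod_offDiag_eq, prod_offDiag_eq (fun i j => f (Fin.castSucc i) (Fin.castSucc j))]
  simp only [Fin.prod_univ_castSucc, Finset.prod_mul_distrib]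
  simp [Fin.castSucc_ne_last, (Fin.castSucc_ne_last _).symm]
  ac_rfl

lemma prod_lt_succ {n : ℕ} (f : Fin (n + 1) → Fin (n + 1) → M) :
    ∏ p ∈ univ.filter (fun p : Fin (n + 1) × Fin (n + 1) => p.1 < p.2), f p.1 p.2 =
      (∏ j : Fin n, f 0 j.succ) *
        ∏ p ∈ univ.filter (fun p : Fin n × Fin n => p.1 < p.2), f p.1.succ p.2.succ := by
  rw [prod_lt_eq, prod_lt_eq (fun i j => f (Fin.succ i) (Fin.succ j))]
  simp only [Fin.prod_univ_succ, Finset.prod_mul_distrib]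
  simp

lemma prod_lt_castSucc {n : ℕ} (f : Fin (n + 1) → Fin (n + 1) → M) :
    ∏ p ∈ univ.filter (fun p : Fin (n + 1) × Fin (n + 1) => p.1 < p.2), f p.1 p.2 =
      (∏ j : Fin n, f j.castSucc (Fin.last n)) *
        ∏ p ∈ univ.filter (fun p : Fin n × Fin n => p.1 < p.2),
          f p.1.castSucc p.2.castSucc := by
  rw [prod_lt_eq, prod_lt_eq (fun i j => f (Fin.castSucc i) (Fin.castSucc j))]
  simp only [Fin.prod_univ_castSucc, Finset.prod_mul_distrib]
  simp [Fin.castSucc_lt_last, (Fin.castSucc_lt_last _).not_gt, mul_comm]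

end Products

section Nonzero

variable {m : ℕ}

lemma alg_ne {p : MvPolynomial (Fin m) ℚ} (c : Fin m → ℚ) (h : MvPolynomial.eval c p ≠ 0) :
    algebraMap (MvPolynomial (Fin m) ℚ) (FF m) p ≠ 0 := by
  intro h0
  rw [map_eq_zero_iff _ (IsFractionRing.injective _ _)] at h0
  simp [h0] at h

lemma yy_ne (i : Fin m) : yy i ≠ 0 :=
  alg_ne (fun _ => 1) (by simp)

lemma one_sub_yy_ne (i : Fin m) : 1 - yy i ≠ 0 := by
  have := alg_ne (p := 1 - MvPolynomial.X i) (fun _ => 0) (by simp)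
  simpa [yy] using this

lemma one_sub_yy_mul_ne (i j : Fin m) : 1 - yy i * yy j ≠ 0 := by
  have := alg_ne (p := 1 - MvPolynomial.X i * MvPolynomial.X j) (fun _ => 0) (by simp)
  simpa [yy] using this

lemma yy_sub_ne {i j : Fin m} (h : i ≠ j) : yy i - yy j ≠ 0 := by
  have := alg_ne (p := MvPolynomial.X i - MvPolynomial.X j) (Pi.single i 1)
    (by simp [h.symm])
  simpa [yy] using this

lemma one_sub_X_ne : (1 - RatFunc.X : RatFunc (FF m)) ≠ 0 := by
  have : algebraMap (Polynomial (FF m)) (RatFunc (FF m)) (1 - Polynomial.X) ≠ 0 :=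
    aux_ne (a := 0) (by simp)
  simpa using this

lemma one_sub_X_mul_ne (c : FF m) : (1 - RatFunc.X * RatFunc.C c : RatFunc (FF m)) ≠ 0 := by
  have : algebraMap (Polynomial (FF m)) (RatFunc (FF m))
      (1 - Polynomial.X * Polynomial.C c) ≠ 0 :=
    aux_ne (a := 0) (by simp)
  rwa [map_sub, map_mul, map_one, RatFunc.algebraMap_X, RatFunc.algebraMap_C] at this

end Nonzero

/-- The expanded shape of `ratQ`. -/
lemma ratQ_eq {m : ℕ} (P : MvPolynomial (Fin (m + 1)) ℚ) :
    ratQ P =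
      ((∏ j : Fin m, ((1 - RatFunc.X / RatFunc.C (yy j)) * (1 - RatFunc.C (yy j) / RatFunc.X))) *
        ∏ p ∈ (univ : Finset (Fin m)).offDiag, (1 - RatFunc.C (yy p.1) / RatFunc.C (yy p.2))) *
      MvPolynomial.eval₂ (RatFunc.C.comp (ψ m)) (fun i => (uu i)⁻¹) P /
      (((1 - RatFunc.X) * ∏ j : Fin m, (1 - RatFunc.C (yy j))) *
        ((∏ j : Fin m, (1 - RatFunc.X * RatFunc.C (yy j))) *
          ∏ p ∈ univ.filter (fun p : Fin m × Fin m => p.1 < p.2),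
            (1 - RatFunc.C (yy p.1) * RatFunc.C (yy p.2)))) := by
  unfold ratQ
  rw [prod_offDiag_succ (fun i j => 1 - uu i / uu j), prod_lt_succ (fun i j => 1 - uu i * uu j),
    Fin.prod_univ_succ]
  rfl

lemma reg_P {m : ℕ} (a : FF m) (ha : a ≠ 0) (P : MvPolynomial (Fin (m + 1)) ℚ) :
    Reg a (MvPolynomial.eval₂ (RatFunc.C.comp (ψ m)) (fun i => (uu i)⁻¹) P)
      (MvPolynomial.eval₂ (ψ m) (Fin.cases a⁻¹ fun j => (yy j)⁻¹) P) := by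
  apply Reg.eval₂
  intro i
  cases i using Fin.cases with
  | zero => exact (Reg.X a).inv ha
  | succ j => exact (Reg.C a _).inv (yy_ne j)

lemma reg_num {m : ℕ} (a : FF m) (ha : a ≠ 0) :
    Reg a ((∏ j : Fin m, ((1 - RatFunc.X / RatFunc.C (yy j)) *
          (1 - RatFunc.C (yy j) / RatFunc.X))) *
        ∏ p ∈ (univ : Finset (Fin m)).offDiag, (1 - RatFunc.C (yy p.1) / RatFunc.C (yy p.2)))
      ((∏ j : Fin m, ((1 - a / yy j) * (1 - yy j / a))) *
        ∏ p ∈ (univ : Finset (Fin m)).offDiag, (1 - yy p.1 / yy p.2)) := by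
  apply Reg.mul
  · apply Reg.prod
    intro j _
    exact ((Reg.one a).sub ((Reg.X a).div (Reg.C a _) (yy_ne j))).mul
      ((Reg.one a).sub ((Reg.C a _).div (Reg.X a) ha))
  · apply Reg.prod
    intro p _
    exact (Reg.one a).sub ((Reg.C a _).div (Reg.C a _) (yy_ne _))

lemma reg_lt {m : ℕ} (a : FF m) :
    Reg a (∏ p ∈ univ.filter (fun p : Fin m × Fin m => p.1 < p.2),
            (1 - RatFunc.C (yy p.1) * RatFunc.C (yy p.2)))
      (∏ p ∈ univ.filter (fun p : Fin m × Fin m => p.1 < p.2), (1 - yy p.1 * yy p.2)) := by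
  apply Reg.prod
  intro p _
  exact (Reg.one a).sub ((Reg.C a _).mul (Reg.C a _))

lemma reg_one_sub {m : ℕ} (a : FF m) :
    Reg a (∏ j : Fin m, (1 - RatFunc.C (yy j))) (∏ j : Fin m, (1 - yy j)) := by
  apply Reg.prod
  intro p _
  exact (Reg.one a).sub (Reg.C a _)

lemma lt_ne {m : ℕ} :
    (∏ p ∈ univ.filter (fun p : Fin m × Fin m => p.1 < p.2), (1 - yy p.1 * yy p.2)) ≠ 0 :=
  Finset.prod_ne_zero_iff.2 fun _ _ => one_sub_yy_mul_ne _ _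

lemma prod_one_sub_ne {m : ℕ} : (∏ j : Fin m, (1 - yy j)) ≠ 0 :=
  Finset.prod_ne_zero_iff.2 fun _ _ => one_sub_yy_ne _

lemma A0_eq {m : ℕ} (P : MvPolynomial (Fin (m + 1)) ℚ) :
    A0 P = (∏ p ∈ (univ : Finset (Fin m)).offDiag, (1 - yy p.1 / yy p.2)) *
      (MvPolynomial.eval₂ (ψ m) (Fin.cases 1 fun j => (yy j)⁻¹) P *
        ∏ i : Fin m, (1 - (yy i)⁻¹)) /
      ((∏ i : Fin m, (1 - yy i)) *
        ∏ p ∈ univ.filter (fun p : Fin m × Fin m => p.1 < p.2), (1 - yy p.1 * yy p.2)) := by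
  unfold A0
  have e : ∀ n d1 d2 : RatFunc (FF m),
      n / (((1 - RatFunc.X) * d1) * d2) * (1 - RatFunc.X) = n / (d1 * d2) := by
    intro n d1 d2
    rw [mul_assoc, mul_comm (1 - RatFunc.X), ← div_div, div_mul_cancel₀ _ one_sub_X_ne]
  rw [ratQ_eq, e]
  have hD2 : Reg (1 : FF m) (∏ j : Fin m, (1 - RatFunc.X * RatFunc.C (yy j)))
      (∏ j : Fin m, (1 - 1 * yy j)) :=
    Reg.prod _ fun j _ => (Reg.one _).sub ((Reg.X _).mul (Reg.C _ _))
  simp only [one_mul] at hD2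
  have h := ((reg_num (1 : FF m) one_ne_zero).mul (reg_P 1 one_ne_zero P)).div
    ((reg_one_sub 1).mul (hD2.mul (reg_lt 1)))
    (mul_ne_zero prod_one_sub_ne (mul_ne_zero prod_one_sub_ne lt_ne))
  rw [h.eval_eq]
  simp only [Finset.prod_mul_distrib, div_one, inv_one, one_div]
  have h1 := prod_one_sub_ne (m := m)
  have h2 := lt_ne (m := m)
  field_simp

lemma Ar_eq {l : ℕ} (P : MvPolynomial (Fin (l + 2)) ℚ) :
    Ar P (Fin.last l) =
        (MvPolynomial.eval₂ (ψ (l + 1))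
            (Fin.cases (yy (Fin.last l)) (fun j => (yy j)⁻¹)) P *
          ((1 + yy (Fin.last l)) ^ 2 / yy (Fin.last l)) *
          ∏ j : Fin l,
            ((1 - (yy (Fin.last l) * yy j.castSucc)⁻¹) *
              (1 - yy (Fin.last l) / yy j.castSucc))) *
          (∏ p ∈ (univ : Finset (Fin l)).offDiag,
            (1 - yy p.1.castSucc / yy p.2.castSucc)) /
        ((∏ i : Fin l, (1 - yy i.castSucc)) *
          ∏ p ∈ univ.filter (fun p : Fin l × Fin l => p.1 < p.2),
            (1 - yy p.1.castSucc * yy p.2.castSucc)) := by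
  unfold Ar
  set y := yy (Fin.last l) with hy
  have hy0 : y ≠ 0 := yy_ne _
  have hi0 : y⁻¹ ≠ 0 := inv_ne_zero hy0
  have e : ∀ n d1 d2 d3 : RatFunc (FF (l + 1)),
      n / (d1 * ((d2 * (1 - RatFunc.X * RatFunc.C y)) * d3)) * (1 - RatFunc.X * RatFunc.C y)
        = n / (d1 * (d2 * d3)) := by
    intro n d1 d2 d3
    have : d1 * ((d2 * (1 - RatFunc.X * RatFunc.C y)) * d3) =
      (d1 * (d2 * d3)) * (1 - RatFunc.X * RatFunc.C y) := by ring
    rw [this, ← div_div, div_mul_cancel₀ _ (one_sub_X_mul_ne y)]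
  rw [ratQ_eq, Fin.prod_univ_castSucc (fun j => (1 - RatFunc.X * RatFunc.C (yy j))), e]
  have hD2 : Reg y⁻¹ (∏ j : Fin l, (1 - RatFunc.X * RatFunc.C (yy j.castSucc)))
      (∏ j : Fin l, (1 - y⁻¹ * yy j.castSucc)) :=
    Reg.prod _ fun j _ => (Reg.one _).sub ((Reg.X _).mul (Reg.C _ _))
  have hD2n : (∏ j : Fin l, (1 - y⁻¹ * yy j.castSucc)) ≠ 0 := by
    refine Finset.prod_ne_zero_iff.2 fun j _ => ?_
    have h : y - yy j.castSucc ≠ 0 := yy_sub_ne (Fin.castSucc_ne_last j).symm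
    have : 1 - y⁻¹ * yy j.castSucc = y⁻¹ * (y - yy j.castSucc) := by
      field_simp
    rw [this]
    exact mul_ne_zero hi0 h
  have h1y : 1 - y ≠ 0 := one_sub_yy_ne _
  have h1yi : 1 - y⁻¹ ≠ 0 := by
    have : 1 - y⁻¹ = - (y⁻¹ * (1 - y)) := by field_simp; ring
    rw [this]
    exact neg_ne_zero.2 (mul_ne_zero hi0 h1y)
  have h := ((reg_num y⁻¹ hi0).mul (reg_P y⁻¹ hi0 P)).div
    ((((Reg.one _).sub (Reg.X y⁻¹)).mul (reg_one_sub y⁻¹)).mul (hD2.mul (reg_lt y⁻¹)))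
    (mul_ne_zero (mul_ne_zero h1yi prod_one_sub_ne) (mul_ne_zero hD2n lt_ne))
  rw [h.eval_eq, inv_inv]
  have hA := prod_one_sub_ne (m := l + 1)
  have hB := lt_ne (m := l + 1)
  rw [prod_offDiag_castSucc (fun i j : Fin (l + 1) => 1 - yy i / yy j)]
  rw [prod_lt_castSucc (fun i j : Fin (l + 1) => 1 - yy i * yy j)] at hB ⊢
  rw [Fin.prod_univ_castSucc] at hA
  rw [Fin.prod_univ_castSucc, Fin.prod_univ_castSucc (fun j : Fin (l + 1) => 1 - yy j)]
  simp only [← hy] at hA hB ⊢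
  have c1 : ∏ j : Fin l, (1 - y⁻¹ / yy j.castSucc) =
      ∏ j : Fin l, (1 - (y * yy j.castSucc)⁻¹) :=
    Finset.prod_congr rfl fun j _ => by rw [mul_inv, div_eq_mul_inv]
  have c2 : ∏ j : Fin l, (1 - yy j.castSucc / y⁻¹) = ∏ j : Fin l, (1 - yy j.castSucc * y) :=
    Finset.prod_congr rfl fun j _ => by rw [div_inv_eq_mul]
  have c3 : ∏ j : Fin l, (1 - yy j.castSucc / y) = ∏ j : Fin l, (1 - y⁻¹ * yy j.castSucc) :=
    Finset.prod_congr rfl fun j _ => by rw [div_eq_mul_inv, mul_comm]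
  simp only [Finset.prod_mul_distrib]
  rw [c1, c2, c3]
  have c4 : (1 - y⁻¹ / y) * (1 - y / y⁻¹) = (1 - y⁻¹) * (1 - y) * ((1 + y) ^ 2 / y) := by
    field_simp
    ring
  rw [c4]
  generalize MvPolynomial.eval₂ (ψ (l + 1)) (Fin.cases y (fun j => (yy j)⁻¹)) P = E
  generalize (∏ j : Fin l, (1 - y⁻¹ * yy j.castSucc)) = a1 at *
  generalize (∏ j : Fin l, (1 - yy j.castSucc * y)) = a2 at *
  generalize (∏ j : Fin l, (1 - (y * yy j.castSucc)⁻¹)) = a3 at *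
  generalize (∏ j : Fin l, (1 - y / yy j.castSucc)) = a4 at *
  generalize (∏ j : Fin l, (1 - yy j.castSucc)) = a5 at *
  generalize (∏ p ∈ univ.filter (fun p : Fin l × Fin l => p.1 < p.2),
            (1 - yy p.1.castSucc * yy p.2.castSucc)) = a6 at *
  generalize (∏ p ∈ (univ : Finset (Fin l)).offDiag,
            (1 - yy p.1.castSucc / yy p.2.castSucc)) = a7 at *
  generalize (1 + y) ^ 2 / y = a8 at *
  generalize 1 - y⁻¹ = a9 at *
  generalize 1 - y = a10 at *
  have hA1 := left_ne_zero_of_mul hA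
  have hB1 := left_ne_zero_of_mul hB
  have hB2 := right_ne_zero_of_mul hB
  rw [div_eq_div_iff (mul_ne_zero (mul_ne_zero h1yi hA) (mul_ne_zero hD2n hB))
    (mul_ne_zero hA1 hB2)]
  ring

section Laurent

variable {l : ℕ}

/-- Polynomial in the `xⱼ⁻¹` with coefficients Laurent polynomials in `xₙ`. -/
def Lau (l : ℕ) (f : FF (l + 1)) : Prop :=
  ∃ (N : ℕ) (p : MvPolynomial (Fin (l + 1)) ℚ),
    MvPolynomial.eval₂ (ψ (l + 1))
      (fun j : Fin (l + 1) => if (j : ℕ) < l then (yy j)⁻¹ else yy j) p /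
        yy (Fin.last l) ^ N = f

lemma Lau.C (c : ℚ) : Lau l (ψ (l + 1) c) :=
  ⟨0, MvPolynomial.C c, by simp⟩

lemma Lau.one : Lau l 1 := by simpa using Lau.C (l := l) 1

lemma Lau.mul {f g : FF (l + 1)} (hf : Lau l f) (hg : Lau l g) : Lau l (f * g) := by
  obtain ⟨N, p, rfl⟩ := hf
  obtain ⟨M, q, rfl⟩ := hg
  exact ⟨N + M, p * q, by rw [MvPolynomial.eval₂_mul, pow_add, div_mul_div_comm]⟩

lemma Lau.yn : Lau l (yy (Fin.last l)) :=
  ⟨0, MvPolynomial.X (Fin.last l), by simp⟩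

lemma Lau.yn_inv : Lau l (yy (Fin.last l))⁻¹ :=
  ⟨1, 1, by simp⟩

lemma Lau.yj_inv (j : Fin l) : Lau l (yy j.castSucc)⁻¹ :=
  ⟨0, MvPolynomial.X j.castSucc, by simp⟩

lemma Lau.y_inv (j : Fin (l + 1)) : Lau l (yy j)⁻¹ := by
  cases j using Fin.lastCases with
  | last => exact Lau.yn_inv
  | cast j => exact Lau.yj_inv j

lemma Lau.add {f g : FF (l + 1)} (hf : Lau l f) (hg : Lau l g) : Lau l (f + g) := by
  obtain ⟨N, p, rfl⟩ := hf
  obtain ⟨M, q, rfl⟩ := hg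
  have hy : yy (Fin.last l) ≠ 0 := yy_ne _
  refine ⟨N + M, p * MvPolynomial.X (Fin.last l) ^ M + MvPolynomial.X (Fin.last l) ^ N * q, ?_⟩
  rw [div_add_div _ _ (pow_ne_zero _ hy) (pow_ne_zero _ hy), pow_add]
  simp [MvPolynomial.eval₂_add, MvPolynomial.eval₂_mul, MvPolynomial.eval₂_pow]

lemma Lau.sub {f g : FF (l + 1)} (hf : Lau l f) (hg : Lau l g) : Lau l (f - g) := by
  have h := hf.add ((Lau.C (-1)).mul hg)
  have e1 : f + ψ (l + 1) (-1) * g = f - g := by rw [map_neg, map_one]; ring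
  rwa [e1] at h

lemma Lau.prod {ι : Type*} (s : Finset ι) {f : ι → FF (l + 1)} (h : ∀ i, Lau l (f i)) :
    Lau l (∏ i ∈ s, f i) := by
  classical
  induction s using Finset.induction_on with
  | empty => simpa using Lau.one
  | insert i s hi ih =>
    rw [Finset.prod_insert hi]
    exact (h i).mul ih

lemma Lau.eval₂ {σ : Type*} {v : σ → FF (l + 1)} (h : ∀ i, Lau l (v i)) (P : MvPolynomial σ ℚ) :
    Lau l (MvPolynomial.eval₂ (ψ (l + 1)) v P) := by
  induction P using MvPolynomial.induction_on with
  | C c =>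
    rw [MvPolynomial.eval₂_C]
    exact Lau.C _
  | add p q hp hq =>
    rw [MvPolynomial.eval₂_add]
    exact hp.add hq
  | mul_X p i hp =>
    rw [MvPolynomial.eval₂_mul, MvPolynomial.eval₂_X]
    exact hp.mul (h i)

lemma Lau.main (P : MvPolynomial (Fin (l + 2)) ℚ) :
    Lau l (MvPolynomial.eval₂ (ψ (l + 1))
            (Fin.cases (yy (Fin.last l)) (fun j => (yy j)⁻¹)) P *
          ((1 + yy (Fin.last l)) ^ 2 / yy (Fin.last l)) *
          ∏ j : Fin l,
            ((1 - (yy (Fin.last l) * yy j.castSucc)⁻¹) *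
              (1 - yy (Fin.last l) / yy j.castSucc))) := by
  refine Lau.mul (Lau.mul (Lau.eval₂ ?_ P) ?_) (Lau.prod _ ?_)
  · intro i
    cases i using Fin.cases with
    | zero => exact Lau.yn
    | succ j => exact Lau.y_inv j
  · rw [div_eq_mul_inv, pow_two]
    exact (((Lau.one).add Lau.yn).mul ((Lau.one).add Lau.yn)).mul Lau.yn_inv
  · intro j
    rw [mul_inv, div_eq_mul_inv]
    exact ((Lau.one).sub (Lau.yn_inv.mul (Lau.yj_inv j))).mul
      ((Lau.one).sub (Lau.yn.mul (Lau.yj_inv j)))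

end Laurent

lemma exists_P' {m : ℕ} (P : MvPolynomial (Fin (m + 1)) ℚ) :
    ∃ P' : MvPolynomial (Fin m) ℚ,
      MvPolynomial.eval₂ (ψ m) (fun i => (yy i)⁻¹) P' =
        MvPolynomial.eval₂ (ψ m) (Fin.cases 1 fun j => (yy j)⁻¹) P *
          ∏ i : Fin m, (1 - (yy i)⁻¹) := by
  have h1 : ∃ p : MvPolynomial (Fin m) ℚ,
      MvPolynomial.eval₂ (ψ m) (fun i => (yy i)⁻¹) p =
        MvPolynomial.eval₂ (ψ m) (Fin.cases 1 fun j => (yy j)⁻¹) P := by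
    induction P using MvPolynomial.induction_on with
    | C c => exact ⟨MvPolynomial.C c, by simp⟩
    | add p q hp hq =>
      obtain ⟨p', hp⟩ := hp
      obtain ⟨q', hq⟩ := hq
      exact ⟨p' + q', by rw [MvPolynomial.eval₂_add, MvPolynomial.eval₂_add, hp, hq]⟩
    | mul_X p i hp =>
      obtain ⟨p', hp⟩ := hp
      cases i using Fin.cases with
      | zero => exact ⟨p', by rw [MvPolynomial.eval₂_mul, hp, MvPolynomial.eval₂_X]; simp⟩
      | succ j =>
        exact ⟨p' * MvPolynomial.X j, by
          rw [MvPolynomial.eval₂_mul, MvPolynomial.eval₂_mul, hp, MvPolynomial.eval₂_X,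
            MvPolynomial.eval₂_X]
          simp⟩
  obtain ⟨p, hp⟩ := h1
  refine ⟨p * ∏ i, (1 - MvPolynomial.X i), ?_⟩
  rw [MvPolynomial.eval₂_mul, hp]
  congr 1
  rw [← MvPolynomial.coe_eval₂Hom, map_prod]
  simp

end Stmt9Aux

/-- **Lemma 5, second part.**  Let `Q` be gratifying in `x₁,…,xₙ` with defining
polynomial `P`; here `n = l+2`, the variables `x₂,…,xₙ` are the `m = l+1`
variables of the field `FF (l+1) = ℚ(x₂,…,xₙ)`, and `xₙ = yy (Fin.last l)`.

(i) `A₀` is gratifying in `x₂,…,xₙ`, with defining polynomial `P'` determined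
by `P'(x₂⁻¹,…,xₙ⁻¹) = P(1,x₂⁻¹,…,xₙ⁻¹)·∏_{i=2}^n (1-xᵢ⁻¹)`.

(ii) `Aₙ = P''(x₂⁻¹,…,x_{n-1}⁻¹)·∏_{2≤i≠j≤n-1}(1-xᵢ/xⱼ) /
      (∏_{i=2}^{n-1}(1-xᵢ)·∏_{2≤i<j≤n-1}(1-xᵢxⱼ))`,
where `P''` is a polynomial in `x₂,…,x_{n-1}` with coefficients Laurent
polynomials in `xₙ` — encoded as `P''₀/xₙ^N` with `P''₀` an ordinary polynomial
in `x₂,…,x_{n-1},xₙ` (the variable `Fin.last l` playing the role of `xₙ`, which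
is *not* inverted in the defining relation) — determined by
`P''(x₂⁻¹,…,x_{n-1}⁻¹) = P(xₙ,x₂⁻¹,…,xₙ⁻¹)·((1+xₙ)²/xₙ)·∏_{j=2}^{n-1}(1-1/(xₙxⱼ))(1-xₙ/xⱼ)`. -/
theorem stmt_9 (l : ℕ) (P : MvPolynomial (Fin (l + 2)) ℚ) :
    (∃ P' : MvPolynomial (Fin (l + 1)) ℚ,
      MvPolynomial.eval₂ (ψ (l + 1)) (fun i => (yy i)⁻¹) P' =
        MvPolynomial.eval₂ (ψ (l + 1)) (Fin.cases 1 fun j => (yy j)⁻¹) P *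
          ∏ i : Fin (l + 1), (1 - (yy i)⁻¹) ∧
      A0 P =
        (∏ p ∈ (univ : Finset (Fin (l + 1))).offDiag, (1 - yy p.1 / yy p.2)) *
          MvPolynomial.eval₂ (ψ (l + 1)) (fun i => (yy i)⁻¹) P' /
        ((∏ i : Fin (l + 1), (1 - yy i)) *
          ∏ p ∈ univ.filter (fun p : Fin (l + 1) × Fin (l + 1) => p.1 < p.2),
            (1 - yy p.1 * yy p.2))) ∧
    (∃ (N : ℕ) (P'' : MvPolynomial (Fin (l + 1)) ℚ),
      MvPolynomial.eval₂ (ψ (l + 1))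
          (fun j : Fin (l + 1) => if (j : ℕ) < l then (yy j)⁻¹ else yy j) P'' / yy (Fin.last l) ^ N =
        MvPolynomial.eval₂ (ψ (l + 1))
            (Fin.cases (yy (Fin.last l)) (fun j => (yy j)⁻¹)) P *
          ((1 + yy (Fin.last l)) ^ 2 / yy (Fin.last l)) *
          ∏ j : Fin l,
            ((1 - (yy (Fin.last l) * yy j.castSucc)⁻¹) *
              (1 - yy (Fin.last l) / yy j.castSucc)) ∧
      Ar P (Fin.last l) =
        MvPolynomial.eval₂ (ψ (l + 1))
            (fun j : Fin (l + 1) => if (j : ℕ) < l then (yy j)⁻¹ else yy j) P'' / yy (Fin.last l) ^ N *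
          (∏ p ∈ (univ : Finset (Fin l)).offDiag,
            (1 - yy p.1.castSucc / yy p.2.castSucc)) /
        ((∏ i : Fin l, (1 - yy i.castSucc)) *
          ∏ p ∈ univ.filter (fun p : Fin l × Fin l => p.1 < p.2),
            (1 - yy p.1.castSucc * yy p.2.castSucc))) := by
  constructor
  · obtain ⟨P', hP'⟩ := Stmt9Aux.exists_P' P
    exact ⟨P', hP', by rw [hP']; exact Stmt9Aux.A0_eq P⟩
  · obtain ⟨N, P'', h⟩ := Stmt9Aux.Lau.main P
    exact ⟨N, P'', h, by rw [h]; exact Stmt9Aux.Ar_eq P⟩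
end

section
/- Let k ≥ 1, n = 2k, and let Q be gratifying in x_1,…,x_n with defining polynomial P = 1, i.e. Q = ∏_{1≤i≠j≤n}(1 − x_i/x_j) / [∏_{i=1}^n (1 − x_i) · ∏_{1≤i<j≤n}(1 − x_i x_j)]. For the partition M_0 = {{1,k+1},…,{k,2k}}, the rational function Q_{M_0} = Q·∏_{e=1}^k (1 − x_e x_{k+e}) evaluated at x_e = x_{k+e}^{−1} (1 ≤ e ≤ k) satisfies Q_{M_0} = B̄_k(x_{k+1},…,x_{2k})^2 · x_{k+1} x_{k+2} ⋯ x_{2k}. -/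
open Finset

/-- The variable `xᵢ` inside the field `ℚ(x₁,…,xₙ)` of rational functions. -/
noncomputable def xF (n : ℕ) (i : Fin n) : FractionRing (MvPolynomial (Fin n) ℚ) :=
  algebraMap (MvPolynomial (Fin n) ℚ) _ (MvPolynomial.X i)

/-- The substitution associated with the complete matching
`M₀ = {{1,k+1},…,{k,2k}}` of `{1,…,2k}` (`0`-based: blocks `{e, k+e}`):
`x_e = x_{k+e}⁻¹` for `e ≤ k`, the remaining variables are kept. -/
noncomputable def v11 (k : ℕ) (i : Fin (2 * k)) :
    FractionRing (MvPolynomial (Fin (2 * k)) ℚ) :=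
  if h : (i : ℕ) < k then (xF (2 * k) ⟨(i : ℕ) + k, by omega⟩)⁻¹ else xF (2 * k) i

section Helpers11

/-- Polynomials `q_j` with `y^j + y^{-(j+1)} = (1 + y⁻¹) q_j (y + y⁻¹)`. -/
noncomputable def q11 (K : Type*) [Field K] : ℕ → Polynomial K
  | 0 => 1
  | 1 => Polynomial.X - 1
  | (n + 2) => Polynomial.X * q11 K (n + 1) - q11 K n

theorem q11_eval {K : Type*} [Field K] (y : K) (hy : y ≠ 0) (n : ℕ) :
    y ^ n + y⁻¹ ^ (n + 1) = (1 + y⁻¹) * (q11 K n).eval (y + y⁻¹) := by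
  induction n using Nat.twoStepInduction with
  | zero => simp [q11]
  | one => simp [q11]; field_simp; ring
  | more n h0 h1 =>
    simp only [q11, Polynomial.eval_sub, Polynomial.eval_mul, Polynomial.eval_X]
    rw [mul_sub, ← h0, mul_left_comm, ← h1]
    have hz : y * y⁻¹ = 1 := mul_inv_cancel₀ hy
    generalize y⁻¹ = z at hz
    linear_combination (-(z ^ (n + 1) + y ^ n)) * hz

theorem q11_monic_deg {K : Type*} [Field K] (n : ℕ) :
    (q11 K n).Monic ∧ (q11 K n).natDegree = n := by
  induction n using Nat.twoStepInduction with
  | zero => simp [q11]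
  | one =>
    have := Polynomial.monic_X_sub_C (1 : K)
    have h2 := Polynomial.natDegree_X_sub_C (1 : K)
    simp only [map_one] at this h2
    exact ⟨this, h2⟩
  | more n h0 h1 =>
    have hm : (Polynomial.X * q11 K (n + 1)).Monic := Polynomial.monic_X.mul h1.1
    have hd : (Polynomial.X * q11 K (n + 1)).natDegree = n + 2 := by
      rw [Polynomial.natDegree_X_mul h1.1.ne_zero, h1.2]
    have hlt : (q11 K n).degree < (Polynomial.X * q11 K (n + 1)).degree := by
      apply Polynomial.degree_lt_degree
      omega
    refine ⟨hm.sub_of_left hlt, ?_⟩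
    rw [q11, Polynomial.natDegree_sub_eq_left_of_natDegree_lt (by omega), hd]

theorem det11 {K : Type*} [Field K] (k : ℕ) (y : Fin k → K) (hy : ∀ i, y i ≠ 0) :
    Matrix.det (Matrix.of fun i j : Fin k => y i ^ (j : ℕ) + (y i)⁻¹ ^ ((j : ℕ) + 1)) =
      (∏ i, (1 + (y i)⁻¹)) *
        ∏ i, ∏ j, if i < j then (y j + (y j)⁻¹) - (y i + (y i)⁻¹) else 1 := by
  have h1 : (Matrix.of fun i j : Fin k => y i ^ (j : ℕ) + (y i)⁻¹ ^ ((j : ℕ) + 1)) =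
      Matrix.of fun i j : Fin k => (1 + (y i)⁻¹) *
        (Matrix.of fun i j : Fin k => (q11 K j).eval (y i + (y i)⁻¹)) i j := by
    ext i j
    simp only [Matrix.of_apply]
    exact q11_eval _ (hy i) _
  rw [h1, Matrix.det_mul_column]
  congr 1
  have := Matrix.det_eval_matrixOfPolynomials_eq_det_vandermonde
    (fun i => y i + (y i)⁻¹) (fun j : Fin k => q11 K j)
    (fun i => (q11_monic_deg _).2) (fun i => (q11_monic_deg _).1)
  rw [← this, Matrix.det_vandermonde]
  refine Finset.prod_congr rfl fun i _ => ?_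
  rw [← Finset.prod_filter]
  refine Finset.prod_congr ?_ fun _ _ => rfl
  ext j; simp

theorem prod_tri11 {K : Type*} [Field K] (k : ℕ) (g : Fin k → Fin k → K) :
    ∏ a, ∏ b, g a b = (∏ a, g a a) * ∏ a, ∏ b, if a < b then g a b * g b a else 1 := by
  have h : ∀ a b : Fin k, g a b = (if a = b then g a b else 1) *
      ((if a < b then g a b else 1) * (if b < a then g a b else 1)) := by
    intro a b
    rcases lt_trichotomy a b with h | h | h
    · simp [h, h.ne, h.not_gt]
    · simp [h]
    · simp [h, h.ne', h.not_gt]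
  have h' : ∀ a b : Fin k, (if a < b then g a b * g b a else 1) =
      (if a < b then g a b else 1) * (if a < b then g b a else 1) := by
    intro a b; split_ifs <;> simp
  simp only [h']
  have e : ∏ a, ∏ b, g a b = ∏ a, ∏ b, ((if a = b then g a b else 1) *
      ((if a < b then g a b else 1) * (if b < a then g a b else 1))) :=
    Finset.prod_congr rfl fun a _ => Finset.prod_congr rfl fun b _ => h a b
  rw [e]
  simp only [Finset.prod_mul_distrib]
  rw [Finset.prod_comm (f := fun a b => if b < a then g a b else 1)]
  simp

theorem main11 {K : Type*} [Field K] (k : ℕ) (y : Fin k → K) (hy : ∀ i, y i ≠ 0)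
    (hy1 : ∀ i, y i ≠ 1) (hyy : ∀ i j, y i * y j ≠ 1) (hinj : ∀ i j, i ≠ j → y i ≠ y j)
    (v : Fin k ⊕ Fin k → K) (hl : ∀ i, v (Sum.inl i) = (y i)⁻¹)
    (hr : ∀ i, v (Sum.inr i) = y i) :
    (∏ a, ∏ b, if a ≠ b then 1 - v a / v b else 1) /
      ((∏ a, (1 - v a)) *
        ∏ a, ∏ b, if toLex a < toLex b ∧ ¬ (∃ i, a = Sum.inl i ∧ b = Sum.inr i) then
          1 - v a * v b else 1) =
    Matrix.det (Matrix.of fun i j : Fin k => y i ^ (j : ℕ) + (y i)⁻¹ ^ ((j : ℕ) + 1)) ^ 2 *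
      ∏ i, y i := by
  have hinv : ∀ i, 1 - (y i)⁻¹ ≠ 0 := fun i => by
    rw [sub_ne_zero]; intro h; exact hy1 i (by rw [← inv_inv (y i), ← h, inv_one])
  have h1 : ∀ i, 1 - y i ≠ 0 := fun i => sub_ne_zero.2 (hy1 i).symm
  rw [det11 k y hy, div_eq_iff]
  · simp only [Fintype.prod_sum_type, hl, hr, Sum.Lex.inl_lt_inl_iff, Sum.Lex.inr_lt_inr_iff,
      Sum.Lex.inl_lt_inr, Sum.Lex.not_inr_lt_inl, ne_eq, Sum.inl.injEq, Sum.inr.injEq,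
      reduceCtorEq, false_and, and_false, exists_false, not_false_eq_true, and_true, true_and,
      if_false, if_true, exists_eq_left', Finset.prod_const_one, one_mul]
    have L : ∀ (p q r s : Fin k → Fin k → K),
        (∏ a, ((∏ b, p a b) * ∏ b, q a b)) * (∏ a, ((∏ b, r a b) * ∏ b, s a b)) =
          ∏ a, ∏ b, (p a b * q a b * r a b * s a b) := by
      intro p q r s
      simp only [Finset.prod_mul_distrib]
      ring
    have R : ∀ (t p q r : Fin k → Fin k → K) (A B C D : Fin k → K),
        ((∏ a, A a) * ∏ a, ∏ b, t a b) ^ 2 * (∏ a, B a) * (((∏ a, C a) * ∏ a, D a) *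
          ((∏ a, ((∏ b, p a b) * ∏ b, q a b)) * ∏ a, ∏ b, r a b)) =
          (∏ a, (A a ^ 2 * B a * C a * D a)) * ∏ a, ∏ b, (t a b ^ 2 * p a b * q a b * r a b) := by
      intro t p q r A B C D
      simp only [Finset.prod_mul_distrib, Finset.prod_pow]
      ring
    rw [L, R]
    conv_lhs => rw [prod_tri11]
    conv_rhs => rw [prod_tri11]
    conv_rhs => rw [← mul_assoc]
    conv_rhs => lhs; rw [← Finset.prod_mul_distrib]
    refine congrArg₂ (· * ·) ?_ ?_
    · refine Finset.prod_congr rfl fun a _ => ?_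
      have := hy a
      simp
      field_simp
      ring
    · refine Finset.prod_congr rfl fun a _ => Finset.prod_congr rfl fun b _ => ?_
      by_cases hab : a < b
      · have ha := hy a
        have hb := hy b
        simp only [hab, hab.ne, hab.ne', hab.not_gt, if_true, if_false, not_false_eq_true]
        field_simp
        ring
      · rw [if_neg hab, if_neg hab]
  · refine mul_ne_zero (Finset.prod_ne_zero_iff.2 ?_) (Finset.prod_ne_zero_iff.2 fun a _ =>
      Finset.prod_ne_zero_iff.2 fun b _ => ?_)
    · rintro (a | a) -
      · rw [hl]; exact hinv a
      · rw [hr]; exact h1 a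
    · split_ifs with h
      · obtain ⟨h, h'⟩ := h
        rw [sub_ne_zero]
        rcases a with a | a <;> rcases b with b | b <;> simp only [hl, hr]
        · rw [← mul_inv]
          intro e
          exact hyy a b (by rw [← inv_inv (y a * y b), ← e, inv_one])
        · intro e
          have hab : a ≠ b := fun hab => h' ⟨a, rfl, by rw [hab]⟩
          apply hinj a b hab
          have ha := hy a
          field_simp at e
          exact e
        · exact absurd h Sum.Lex.not_inr_lt_inl
        · exact (hyy a b).symm
      · exact one_ne_zero

end Helpers11

/-- **Lemma 7 (even case).**  Let `n = 2k` and let `Q` be gratifying with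
`P = 1`.  For the complete matching `M₀ = {{1,k+1},…,{k,2k}}`, the rational
function `Q_{M₀} = Q·∏_{e=1}^k (1-x_e x_{k+e})` evaluated at `x_e = x_{k+e}⁻¹`
(after cancelling the indicated denominator factors, i.e. the surviving
factors `(1-xᵢxⱼ)` are those with `{i,j}` not a block of `M₀`) satisfies
`Q_{M₀} = B̄_k(x_{k+1},…,x_{2k})² · x_{k+1}⋯x_{2k}`, where
`B̄_k(x) = det(xᵢ^{j-1} + xᵢ^{-j})_{1≤i,j≤k}` (below `j` is `0`-based, so the
entries read `x_{k+i}^j + x_{k+i}^{-(j+1)}`). -/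
theorem stmt_11 (k : ℕ) (hk : 1 ≤ k) :
    (∏ p ∈ (univ : Finset (Fin (2 * k))).offDiag,
        (1 - v11 k p.1 / v11 k p.2)) /
      ((∏ i : Fin (2 * k), (1 - v11 k i)) *
        ∏ p ∈ univ.filter
            (fun p : Fin (2 * k) × Fin (2 * k) => p.1 < p.2 ∧ (p.1 : ℕ) + k ≠ (p.2 : ℕ)),
          (1 - v11 k p.1 * v11 k p.2))
    = Matrix.det (Matrix.of fun i j : Fin k =>
          xF (2 * k) (Fin.castLE (by omega) (Fin.natAdd k i)) ^ (j : ℕ) +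
            (xF (2 * k) (Fin.castLE (by omega) (Fin.natAdd k i)))⁻¹ ^ ((j : ℕ) + 1)) ^ 2 *
        ∏ i : Fin k, xF (2 * k) (Fin.castLE (by omega) (Fin.natAdd k i)) := by
  have hx0 : ∀ i, xF (2 * k) i ≠ 0 := fun i => by
    unfold xF
    rw [Ne, IsFractionRing.to_map_eq_zero_iff]
    exact MvPolynomial.X_ne_zero i
  have hinjF := IsFractionRing.injective (MvPolynomial (Fin (2 * k)) ℚ)
    (FractionRing (MvPolynomial (Fin (2 * k)) ℚ))
  have hx1 : ∀ i, xF (2 * k) i ≠ 1 := fun i h => by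
    unfold xF at h
    rw [← map_one (algebraMap (MvPolynomial (Fin (2 * k)) ℚ) _)] at h
    have := congrArg (MvPolynomial.eval 0) (hinjF h)
    simp at this
  have hxx : ∀ i j, xF (2 * k) i * xF (2 * k) j ≠ 1 := fun i j h => by
    unfold xF at h
    rw [← map_one (algebraMap (MvPolynomial (Fin (2 * k)) ℚ) _), ← map_mul] at h
    have := congrArg (MvPolynomial.eval 0) (hinjF h)
    simp at this
  have hxinj : Function.Injective (xF (2 * k)) := fun i j h =>
    MvPolynomial.X_injective (hinjF h)
  let e : Fin k ⊕ Fin k ≃ Fin (2 * k) := finSumFinEquiv.trans (finCongr (two_mul k).symm)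
  have hel : ∀ i, ((e (Sum.inl i) : Fin (2 * k)) : ℕ) = i := fun i => by simp [e]
  have her : ∀ i, ((e (Sum.inr i) : Fin (2 * k)) : ℕ) = k + i := fun i => by simp [e, add_comm]
  have H := main11 k (fun i => xF (2 * k) (Fin.castLE (by omega) (Fin.natAdd k i)))
    (fun i => hx0 _) (fun i => hx1 _) (fun i j => hxx _ _)
    (fun i j hij h => hij (by
      have := hxinj h
      simpa [Fin.ext_iff] using this))
    (fun a => v11 k (e a))
    (fun i => by
      have : ((e (Sum.inl i) : Fin (2 * k)) : ℕ) < k := by rw [hel]; exact i.2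
      simp only [v11, this, dif_pos]
      congr 2
      ext
      simp [hel, add_comm])
    (fun i => by
      have : ¬ ((e (Sum.inr i) : Fin (2 * k)) : ℕ) < k := by rw [her]; omega
      simp only [v11, this, dif_neg, not_false_eq_true]
      congr 1)
  rw [← H]
  congr 1
  · have : (univ : Finset (Fin (2 * k))).offDiag =
        univ.filter (fun p : Fin (2 * k) × Fin (2 * k) => p.1 ≠ p.2) := by
      ext p; simp
    rw [this, Finset.prod_filter, Fintype.prod_prod_type, ← e.prod_comp]
    refine Finset.prod_congr rfl fun a _ => ?_
    rw [← e.prod_comp]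
    simp only [ne_eq, e.injective.eq_iff]
  · congr 1
    · rw [← e.prod_comp]
    · rw [Finset.prod_filter, Fintype.prod_prod_type, ← e.prod_comp]
      refine Finset.prod_congr rfl fun a _ => ?_
      rw [← e.prod_comp]
      refine Finset.prod_congr rfl fun b _ => ?_
      refine if_congr ?_ rfl rfl
      rw [Fin.lt_def]
      rcases a with a | a <;> rcases b with b | b <;> have ha := a.2 <;> have hb := b.2 <;>
        simp [hel, her, Fin.ext_iff] <;> (try omega)
      constructor
      · rintro ⟨h1, h2⟩ x h3 h4
        omega
      · intro h
        have := h a rfl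
        omega
end

section
/- Let k ≥ 1, n = 2k+1, and let Q be gratifying in x_1,…,x_n with defining polynomial P = 1, i.e. Q = ∏_{1≤i≠j≤n}(1 − x_i/x_j) / [∏_{i=1}^n (1 − x_i) · ∏_{1≤i<j≤n}(1 − x_i x_j)]. For the partition M_1 = {{1,k+1},…,{k,2k},{2k+1}}, the rational function Q_{M_1} = Q·(1 − x_{2k+1})·∏_{e=1}^k (1 − x_e x_{k+e}) evaluated at x_e = x_{k+e}^{−1} (1 ≤ e ≤ k) and x_{2k+1} = 1 satisfies Q_{M_1} = (−1)^k · B_k(x_{k+1},…,x_{2k})^2. -/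
open Finset

/-- The substitution associated with the partition
`M₁ = {{1,k+1},…,{k,2k},{2k+1}}` of `{1,…,2k+1}` (`0`-based: blocks `{e, k+e}`
for `e < k` and the singleton `{2k}`): `x_e = x_{k+e}⁻¹` for `e < k`,
`x_{2k+1} = 1`, the remaining variables are kept. -/
noncomputable def v12 (k : ℕ) (i : Fin (2 * k + 1)) :
    FractionRing (MvPolynomial (Fin (2 * k + 1)) ℚ) :=
  if h : (i : ℕ) < k then (xF (2 * k + 1) ⟨(i : ℕ) + k, by omega⟩)⁻¹
  else if (i : ℕ) = 2 * k then 1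
  else xF (2 * k + 1) i

theorem aux_split {M : Type*} [CommMonoid M] (k : ℕ) (f : Fin (2 * k + 1) → M) :
    ∏ i, f i = (∏ e : Fin k, f ⟨(e : ℕ), by omega⟩) *
      (∏ e : Fin k, f ⟨k + (e : ℕ), by omega⟩) * f ⟨2 * k, by omega⟩ := by
  rw [Fin.prod_univ_castSucc]
  congr 1
  rw [← (finCongr (show k + k = 2 * k by omega)).prod_comp, Fin.prod_univ_add]
  rfl

theorem aux_pair {M : Type*} [CommMonoid M] (k : ℕ) (G : Fin k → Fin k → M) :
    ∏ e, ∏ f, G e f = (∏ e, G e e) * ∏ e, ∏ f, if e < f then G e f * G f e else 1 := by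
  have h : ∀ e f, G e f = (if e = f then G e f else 1) * ((if e < f then G e f else 1) *
      (if f < e then G e f else 1)) := by
    intro e f
    rcases lt_trichotomy e f with h | h | h
    · simp [h, h.ne, h.not_gt]
    · simp [h]
    · simp [h, h.ne', h.not_gt]
  have h2 : ∀ e f, (if e < f then G e f * G f e else 1) =
      (if e < f then G e f else 1) * (if e < f then G f e else 1) := by
    intro e f; split_ifs <;> simp
  calc ∏ e, ∏ f, G e f = ∏ e, ∏ f, ((if e = f then G e f else 1) *
      ((if e < f then G e f else 1) * (if f < e then G e f else 1))) := by
        refine prod_congr rfl fun e _ => prod_congr rfl fun f _ => h e f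
    _ = _ := by
      simp only [h2, prod_mul_distrib]
      congr 1
      · simp
      · congr 1
        exact prod_comm

open Polynomial in
theorem aux_poly {K : Type*} [Field K] (j : ℕ) : ∃ p : K[X], p.natDegree = j ∧ p.Monic ∧
    ∀ y : K, y ≠ 0 → y⁻¹ ^ (j + 1) - y ^ (j + 1) = (y⁻¹ - y) * p.eval (y + y⁻¹) := by
  induction j using Nat.strong_induction_on with
  | _ j ih =>
    match j, ih with
    | 0, _ => exact ⟨1, by simp, by simp, by simp⟩
    | 1, _ => exact ⟨X, by simp, by simp, by intro y hy; simp; ring⟩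
    | j + 2, ih =>
      obtain ⟨p, hp, hpm, hpe⟩ := ih (j + 1) (by omega)
      obtain ⟨q, hq, hqm, hqe⟩ := ih j (by omega)
      have hX : (X * p).natDegree = j + 2 := by
        rw [natDegree_X_mul hpm.ne_zero, hp]
      have hlt : q.natDegree < (X * p).natDegree := by omega
      have hXm : (X * p).Monic := monic_X.mul hpm
      refine ⟨X * p - q, ?_, ?_, ?_⟩
      · rw [natDegree_sub_eq_left_of_natDegree_lt hlt, hX]
      · exact hXm.sub_of_left (degree_lt_degree hlt)
      · intro y hy
        have h1 := hpe y hy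
        have h2 := hqe y hy
        have h3 : y⁻¹ * y = 1 := inv_mul_cancel₀ hy
        simp only [eval_sub, eval_mul, eval_X]
        have : (y⁻¹ - y) * ((y + y⁻¹) * eval (y + y⁻¹) p - eval (y + y⁻¹) q)
          = (y + y⁻¹) * (y⁻¹ ^ (j + 1 + 1) - y ^ (j + 1 + 1)) - (y⁻¹ ^ (j + 1) - y ^ (j + 1)) := by
          rw [h1, h2]; ring
        rw [this]
        linear_combination (y⁻¹ ^ (j+1) - y ^ (j+1)) * (-h3)

theorem aux_det {K : Type*} [Field K] (k : ℕ) (y : Fin k → K) (hy : ∀ e, y e ≠ 0) :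
    Matrix.det (Matrix.of fun i j : Fin k => (y i)⁻¹ ^ ((j : ℕ) + 1) - y i ^ ((j : ℕ) + 1)) =
    (∏ e, ((y e)⁻¹ - y e)) * ∏ e, ∏ f, if e < f then (y f + (y f)⁻¹) - (y e + (y e)⁻¹) else 1 := by
  choose p hp hpm hpe using fun j => aux_poly (K := K) j
  have h1 := Matrix.det_eval_matrixOfPolynomials_eq_det_vandermonde
    (fun e => y e + (y e)⁻¹) (fun j : Fin k => p j) (fun j => hp j) (fun j => hpm j)
  rw [Matrix.det_vandermonde] at h1
  have h2 : (Matrix.of fun i j : Fin k => (y i)⁻¹ ^ ((j : ℕ) + 1) - y i ^ ((j : ℕ) + 1)) =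
    Matrix.of fun i j : Fin k => ((y i)⁻¹ - y i) *
      (Matrix.of fun i j : Fin k => (p j).eval (y i + (y i)⁻¹)) i j := by
    ext i j
    simp [← hpe j (y i) (hy i)]
  rw [h2, Matrix.det_mul_column, ← h1]
  congr 1
  refine prod_congr rfl fun e _ => ?_
  rw [← prod_filter]
  refine prod_congr ?_ fun _ _ => rfl
  ext; simp

theorem aux_main {K : Type*} [Field K] (k : ℕ) (y : Fin k → K) (hy : ∀ e, y e ≠ 0)
    (hy1 : ∀ e, y e ≠ 1) (hm : ∀ e f, y e * y f ≠ 1) (hd : ∀ e f, e ≠ f → y e ≠ y f)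
    (v : Fin (2 * k + 1) → K)
    (hv1 : ∀ e : Fin k, v ⟨(e : ℕ), by omega⟩ = (y e)⁻¹)
    (hv2 : ∀ e : Fin k, v ⟨k + (e : ℕ), by omega⟩ = y e)
    (hv3 : v ⟨2 * k, by omega⟩ = 1) :
    (∏ p ∈ (univ : Finset (Fin (2 * k + 1))).offDiag, (1 - v p.1 / v p.2)) /
      ((∏ i ∈ univ.filter (fun i : Fin (2 * k + 1) => (i : ℕ) ≠ 2 * k), (1 - v i)) *
        ∏ p ∈ univ.filter
            (fun p : Fin (2 * k + 1) × Fin (2 * k + 1) =>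
              p.1 < p.2 ∧ ¬((p.1 : ℕ) + k = (p.2 : ℕ) ∧ (p.1 : ℕ) < k)),
          (1 - v p.1 * v p.2))
    = (-1) ^ k * ((∏ e, ((y e)⁻¹ - y e)) *
        ∏ e, ∏ f, if e < f then (y f + (y f)⁻¹) - (y e + (y e)⁻¹) else 1) ^ 2 := by
  have hN : (∏ p ∈ (univ : Finset (Fin (2 * k + 1))).offDiag, (1 - v p.1 / v p.2)) =
      (∏ e, ((1 - (y e)⁻¹) * (1 - y e)) ^ 2) * ∏ e, ∏ f,
        ((if e ≠ f then (1 - (y e)⁻¹ / (y f)⁻¹) * (1 - y e / y f) else 1) *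
          ((1 - (y e)⁻¹ / y f) * (1 - y e / (y f)⁻¹))) := by
    have : (univ : Finset (Fin (2 * k + 1))).offDiag =
        univ.filter (fun p : Fin (2 * k + 1) × Fin (2 * k + 1) => p.1 ≠ p.2) := by
      ext; simp
    rw [this, prod_filter, Fintype.prod_prod_type]
    have a1 : ∀ e f : Fin k, (e : ℕ) ≠ k + f := by intros; omega
    have a2 : ∀ e f : Fin k, k + (e : ℕ) ≠ f := by intros; omega
    have a3 : ∀ e : Fin k, (e : ℕ) ≠ 2 * k := by intros; omega
    have a4 : ∀ e : Fin k, k + (e : ℕ) ≠ 2 * k := by intros; omega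
    have a5 : ∀ e f : Fin k, ((if e ≠ f then (1 - (y e)⁻¹ / (y f)⁻¹) * (1 - y e / y f) else 1))
      = (if e ≠ f then (1 - (y e)⁻¹ / (y f)⁻¹) else 1) * (if e ≠ f then  (1 - y e / y f) else 1) := by
      intro e f; split_ifs <;> simp
    simp only [aux_split, hv1, hv2, hv3, Fin.mk.injEq, ne_eq, a1, a2, a3, a4, (a3 _).symm,
      (a4 _).symm, Fin.val_inj, add_right_inj, not_false_eq_true, not_true, if_true, if_false,
      a5, prod_mul_distrib, prod_pow, div_one, one_div, inv_inv, mul_one]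
    ring
  have hD : ((∏ i ∈ univ.filter (fun i : Fin (2 * k + 1) => (i : ℕ) ≠ 2 * k), (1 - v i)) *
        ∏ p ∈ univ.filter
            (fun p : Fin (2 * k + 1) × Fin (2 * k + 1) =>
              p.1 < p.2 ∧ ¬((p.1 : ℕ) + k = (p.2 : ℕ) ∧ (p.1 : ℕ) < k)),
          (1 - v p.1 * v p.2)) =
      (∏ e, ((1 - (y e)⁻¹) * (1 - y e)) ^ 2) * ∏ e, ∏ f,
        ((if e < f then (1 - (y e)⁻¹ * (y f)⁻¹) * (1 - y e * y f) else 1) *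
          (if e ≠ f then (1 - (y e)⁻¹ * y f) else 1)) := by
    rw [prod_filter, prod_filter, Fintype.prod_prod_type]
    have a1 : ∀ e f : Fin k, (e : ℕ) < k + f := by intros; omega
    have a2 : ∀ e f : Fin k, ¬ (k + (e : ℕ) < f) := by intros; omega
    have a3 : ∀ e : Fin k, (e : ℕ) < 2 * k := by intros; omega
    have a4 : ∀ e : Fin k, k + (e : ℕ) < 2 * k := by intros; omega
    have a6 : ∀ e f : Fin k, ¬ ((e : ℕ) + k = f) := by intros; omega
    have a7 : ∀ e f : Fin k, ((e : ℕ) + k = k + f) ↔ e = f := by intros; omega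
    have a8 : ∀ e : Fin k, ¬ ((e : ℕ) + k = 2 * k) := by intros; omega
    have a9 : ∀ e : Fin k, ¬ (k + (e : ℕ) < k) := by intros; omega
    have a5 : ∀ e f : Fin k, ((if e < f then (1 - (y e)⁻¹ * (y f)⁻¹) * (1 - y e * y f) else 1))
      = (if e < f then (1 - (y e)⁻¹ * (y f)⁻¹) else 1) * (if e < f then (1 - y e * y f) else 1) := by
      intro e f; split_ifs <;> simp
    simp only [aux_split, hv1, hv2, hv3, Fin.mk_lt_mk, ne_eq, a1, a2, a3, a4, a6, a7, a8, a9,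
      (a3 _).ne, (a4 _).ne, (a3 _).not_gt, (a4 _).not_gt, lt_irrefl, Fin.is_lt,
      add_lt_add_iff_left, Fin.val_fin_lt, true_and, false_and, and_true, and_false,
      not_false_eq_true, not_true, if_true, if_false,
      a5, prod_mul_distrib, prod_pow, prod_const_one, mul_one, one_mul]
    ring
  rw [hN, hD]
  have n1 : ∀ e, (1 - (y e)⁻¹) ≠ 0 := fun e h => hy1 e (by
    rw [sub_eq_zero] at h; exact (inv_eq_one.mp h.symm))
  have n2 : ∀ e, (1 - y e) ≠ 0 := fun e h => hy1 e (sub_eq_zero.mp h).symm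
  have n3 : ∀ e f, 1 - y e * y f ≠ 0 := fun e f h => hm e f (sub_eq_zero.mp h).symm
  have n4 : ∀ e f, 1 - (y e)⁻¹ * (y f)⁻¹ ≠ 0 := fun e f h => hm e f (by
    rw [sub_eq_zero, ← mul_inv] at h; exact inv_eq_one.mp h.symm)
  have n5 : ∀ e f, e ≠ f → 1 - (y e)⁻¹ * y f ≠ 0 := fun e f hef h => hd e f hef (by
    rw [sub_eq_zero] at h
    have := hy e
    field_simp at h
    exact h)
  rw [mul_div_mul_left _ _ (prod_ne_zero_iff.mpr fun e _ =>
    pow_ne_zero 2 (mul_ne_zero (n1 e) (n2 e)))]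
  rw [div_eq_iff (prod_ne_zero_iff.mpr fun e _ => prod_ne_zero_iff.mpr fun f _ => by
    refine mul_ne_zero ?_ ?_
    · split_ifs
      · exact mul_ne_zero (n4 e f) (n3 e f)
      · exact one_ne_zero
    · split_ifs with h
      · exact n5 e f h
      · exact one_ne_zero)]
  rw [aux_pair, aux_pair k (fun e f => ((if e < f then (1 - (y e)⁻¹ * (y f)⁻¹) * (1 - y e * y f) else 1) *
          (if e ≠ f then (1 - (y e)⁻¹ * y f) else 1)))]
  have hc : ((-1 : K)) ^ k = ∏ e : Fin k, (-1 : K) := by simp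
  rw [hc, mul_pow, ← prod_pow, ← prod_pow]
  simp only [← prod_pow]
  have key : ∀ {A B C D E F G : K}, A = C * D * F → B = E * G →
      A * B = C * (D * E) * (F * G) := by
    intro A B C D E F G h1 h2
    rw [h1, h2]; ring
  refine key ?_ ?_
  · rw [← prod_mul_distrib, ← prod_mul_distrib]
    refine prod_congr rfl fun e _ => ?_
    have := hy e
    simp
    field_simp
    ring
  · rw [← prod_mul_distrib]
    refine prod_congr rfl fun e _ => ?_
    rw [← prod_mul_distrib]
    refine prod_congr rfl fun f _ => ?_
    have := hy e
    have := hy f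
    by_cases h : e < f
    · simp only [h, h.ne, h.ne', h.not_gt, if_true, if_false, ne_eq, not_false_eq_true]
      field_simp
      ring
    · simp [h]

/-- **Lemma 7 (odd case).**  Let `n = 2k+1` and let `Q` be gratifying with
`P = 1`.  For the partition `M₁ = {{1,k+1},…,{k,2k},{2k+1}}`, the rational
function `Q_{M₁} = Q·(1-x_{2k+1})·∏_{e=1}^k (1-x_e x_{k+e})` evaluated at
`x_e = x_{k+e}⁻¹` and `x_{2k+1} = 1` (after cancelling the indicated
denominator factors, i.e. the surviving factors `(1-xᵢ)` are those with `i`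
not the singleton and the surviving `(1-xᵢxⱼ)` those with `{i,j}` not a block
of `M₁`) satisfies `Q_{M₁} = (-1)^k · B_k(x_{k+1},…,x_{2k})²`, where
`B_k(x) = det(xᵢ^{-j} - xᵢ^{j})_{1≤i,j≤k}` (below `j` is `0`-based, so the
entries read `x_{k+i}^{-(j+1)} - x_{k+i}^{j+1}`). -/
theorem stmt_12 (k : ℕ) (hk : 1 ≤ k) :
    (∏ p ∈ (univ : Finset (Fin (2 * k + 1))).offDiag,
        (1 - v12 k p.1 / v12 k p.2)) /
      ((∏ i ∈ univ.filter (fun i : Fin (2 * k + 1) => (i : ℕ) ≠ 2 * k),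
          (1 - v12 k i)) *
        ∏ p ∈ univ.filter
            (fun p : Fin (2 * k + 1) × Fin (2 * k + 1) =>
              p.1 < p.2 ∧ ¬((p.1 : ℕ) + k = (p.2 : ℕ) ∧ (p.1 : ℕ) < k)),
          (1 - v12 k p.1 * v12 k p.2))
    = (-1) ^ k *
        Matrix.det (Matrix.of fun i j : Fin k =>
          (xF (2 * k + 1) (Fin.castLE (by omega) (Fin.natAdd k i)))⁻¹ ^ ((j : ℕ) + 1) -
            xF (2 * k + 1) (Fin.castLE (by omega) (Fin.natAdd k i)) ^ ((j : ℕ) + 1)) ^ 2 := by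
  have hinj := IsFractionRing.injective (MvPolynomial (Fin (2 * k + 1)) ℚ)
    (FractionRing (MvPolynomial (Fin (2 * k + 1)) ℚ))
  have x0 : ∀ i, xF (2 * k + 1) i ≠ 0 := by
    intro i h
    exact MvPolynomial.X_ne_zero i (hinj (by simpa [xF] using h))
  have x1 : ∀ i, xF (2 * k + 1) i ≠ 1 := by
    intro i h
    have h2 : (MvPolynomial.X i : MvPolynomial (Fin (2 * k + 1)) ℚ) = 1 :=
      hinj (by rw [map_one]; exact h)
    simpa using congrArg (MvPolynomial.eval 0) h2
  have xm : ∀ i j, xF (2 * k + 1) i * xF (2 * k + 1) j ≠ 1 := by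
    intro i j h
    have h2 : (MvPolynomial.X i * MvPolynomial.X j : MvPolynomial (Fin (2 * k + 1)) ℚ) = 1 :=
      hinj (by rw [map_one, map_mul]; exact h)
    simpa using congrArg (MvPolynomial.eval 0) h2
  have xd : ∀ i j, i ≠ j → xF (2 * k + 1) i ≠ xF (2 * k + 1) j := by
    intro i j hij h
    exact hij (MvPolynomial.X_injective (hinj h))
  rw [aux_det k (fun i => xF (2 * k + 1) (Fin.castLE (by omega) (Fin.natAdd k i)))
    (fun e => x0 _)]
  refine aux_main k (fun i => xF (2 * k + 1) (Fin.castLE (by omega) (Fin.natAdd k i)))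
    (fun e => x0 _) (fun e => x1 _) (fun e f => xm _ _) (fun e f hef => xd _ _ ?_) (v12 k) ?_ ?_ ?_
  · intro h
    apply hef
    simpa [Fin.ext_iff] using h
  · intro e
    simp only [v12, Fin.is_lt, dif_pos]
    congr 2
    ext
    simp [add_comm]
  · intro e
    have a : ¬ (k + (e : ℕ) < k) := by omega
    have b : ¬ (k + (e : ℕ) = 2 * k) := by omega
    simp only [v12, a, b, dif_neg, if_false, not_false_eq_true]
    congr 1
  · have a : ¬ (2 * k < k) := by omega
    simp [v12, a]
end

section
/- For all integers k ≥ 1 and m ≥ 0, det( C(2m, m+1−i−j) + C(2m, m−i+j) )_{1≤i,j≤k} = ∏_{j=0}^{2k−1} ∏_{i=1}^{m} (2i+j)/(i+j). -/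
open Finset

/-- The binomial coefficient `C(N, r)` for an integer `r`, with the convention
that it vanishes for `r < 0` (and, via `Nat.choose`, for `r > N`). -/
def binQ (N : ℕ) (r : ℤ) : ℚ :=
  if 0 ≤ r then (N.choose r.toNat : ℚ) else 0

section aux

/-- Rising factorial. -/
def poch (a : ℚ) (n : ℕ) : ℚ := ∏ l ∈ range n, (a + l)

lemma poch_zero (a : ℚ) : poch a 0 = 1 := by simp [poch]

lemma poch_succ (a : ℚ) (n : ℕ) : poch a (n + 1) = poch a n * (a + n) := by
  simp [poch, prod_range_succ]

lemma poch_succ' (a : ℚ) (n : ℕ) : poch a (n + 1) = a * poch (a + 1) n := by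
  unfold poch
  rw [prod_range_succ', mul_comm]
  congr 1
  · simp
  · apply prod_congr rfl
    intros
    push_cast
    ring

lemma poch_pos (a : ℚ) (ha : 0 < a) (n : ℕ) : 0 < poch a n := by
  unfold poch
  apply prod_pos
  intros
  positivity

/-- diagonal entries of the LU decomposition -/
def dd (r : ℕ) (a b : ℚ) : ℚ :=
  r.factorial * poch a r * poch (b - a) r / (poch b (2 * r) * poch (b + r - 1) r)

lemma dd_succ (r : ℕ) (a b : ℚ) (hb : 0 < b) :
    dd (r + 1) a b = ((r + 1) * (b - a) / (b + r) * (a / (b * (b + 1)))) * dd r (a + 1) (b + 2) := by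
  unfold dd
  have e1 : poch a (r + 1) = a * poch (a + 1) r := poch_succ' _ _
  have e2 : poch (b - a) (r + 1) = (b - a) * poch (b + 2 - (a + 1)) r := by
    rw [poch_succ']; congr 2; ring
  have e3 : poch b (2 * (r + 1)) = b * ((b + 1) * poch (b + 2) (2 * r)) := by
    rw [show 2 * (r + 1) = 2 * r + 1 + 1 by ring, poch_succ', poch_succ']
    congr 3; ring
  have e4 : poch (b + (r + 1 : ℕ) - 1) (r + 1) = (b + r) * poch (b + 2 + r - 1) r := by
    rw [poch_succ']; push_cast; congr 2 <;> ring
  rw [e1, e2, e3, e4, Nat.factorial_succ]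
  have h1 : poch (b + 2) (2 * r) ≠ 0 := (poch_pos _ (by positivity) _).ne'
  have h2 : poch (b + 2 + r - 1) r ≠ 0 :=
    (poch_pos _ (by have : (0:ℚ) ≤ r := by positivity
                    linarith) _).ne'
  push_cast
  field_simp

lemma hankel (k : ℕ) : ∀ a b : ℚ, 0 < b →
    Matrix.det (Matrix.of fun i j : Fin k => poch a (i + j) / poch b (i + j))
      = ∏ r ∈ range k, dd r a b := by
  induction k with
  | zero => intros; simp
  | succ k ih =>
    intro a b hb
    set M : Matrix (Fin (k+1)) (Fin (k+1)) ℚ :=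
      Matrix.of fun i j => poch a (i + j) / poch b (i + j) with hM
    let c : Fin k → ℚ := fun j => (a + j) / (b + j)
    let B : Matrix (Fin (k+1)) (Fin (k+1)) ℚ :=
      Matrix.of fun i j => Fin.cases (M i 0) (fun j' => M i j'.succ - c j' * M i j'.castSucc) j
    have hdet : M.det = B.det := by
      apply Matrix.det_eq_of_forall_col_eq_smul_add_pred c
      · intro i; simp [B]
      · intro i j; simp [B]
    have hB00 : B 0 0 = 1 := by simp [B, hM, poch_zero]
    have hB0 : ∀ j : Fin k, B 0 j.succ = 0 := by
      intro j
      simp only [B, hM, c, Matrix.of_apply, Fin.cases_succ, Fin.val_zero, Fin.val_succ,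
        Fin.val_castSucc, zero_add, poch_succ]
      have := (poch_pos b hb j).ne'
      have : b + (j:ℕ) ≠ 0 := by positivity
      field_simp
      ring
    have hBs : ∀ i j : Fin k, B i.succ j.succ =
        ((i : ℕ) + 1 : ℚ) * (((b - a) / (b + (j:ℕ)) * (a / (b * (b + 1)))) *
          (poch (a+1) (i + j) / poch (b+2) (i+j))) := by
      intro i j
      simp only [B, hM, c, Matrix.of_apply, Fin.cases_succ, Fin.val_succ,
        Fin.val_castSucc]
      obtain ⟨i, hi⟩ := i
      obtain ⟨j, hj⟩ := j
      simp only
      have e0 : i + 1 + (j + 1) = (i + j) + 1 + 1 := by ring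
      have e1 : i + 1 + j = (i + j) + 1 := by ring
      rw [e0, e1]
      have f1 : poch a (i + j + 1) = a * poch (a+1) (i+j) := poch_succ' _ _
      have f2 : poch b (i + j + 1 + 1) = b * ((b + 1) * poch (b+2) (i+j)) := by
        rw [poch_succ', poch_succ']; congr 3; ring
      have f3 := poch_succ b (i + j + 1)
      have g0 : (b + ((i + j + 1 : ℕ):ℚ)) ≠ 0 := by positivity
      have f4 : poch b (i + j + 1) = b * ((b + 1) * poch (b+2) (i+j)) / (b + ((i + j + 1 : ℕ):ℚ)) := by
        rw [eq_div_iff g0, ← f3, f2]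
      rw [poch_succ a (i+j+1), f2, f4, f1]
      have := (poch_pos (b+2) (by positivity) (i+j)).ne'
      have : b + (j:ℚ) ≠ 0 := by positivity
      push_cast at g0 ⊢
      field_simp
      ring
    rw [hdet, Matrix.det_succ_row_zero, Fin.sum_univ_succ]
    simp only [hB0, hB00, mul_zero, zero_mul, sum_const_zero, add_zero]
    have hsub : B.submatrix Fin.succ (Fin.succAbove 0) = Matrix.of fun i j : Fin k =>
        ((i : ℕ) + 1 : ℚ) * (Matrix.of fun i j : Fin k =>
         ((b - a) / (b + (j:ℕ)) * (a / (b * (b + 1)))) *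
          (Matrix.of fun i j : Fin k => (poch (a+1) (i + j) / poch (b+2) (i+j))) i j) i j := by
      ext i j
      simp [hBs]
    rw [hsub, Matrix.det_mul_column (fun i : Fin k => ((i : ℕ) + 1 : ℚ)),
      Matrix.det_mul_row (fun j : Fin k => ((b - a) / (b + (j:ℕ)) * (a / (b * (b + 1))))),
      ih (a+1) (b+2) (by positivity), prod_range_succ',
      Fin.prod_univ_eq_prod_range (fun i => ((i : ℕ) + 1 : ℚ)),
      Fin.prod_univ_eq_prod_range (fun j => ((b - a) / (b + (j:ℕ)) * (a / (b * (b + 1))))),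
      ← prod_mul_distrib, ← prod_mul_distrib]
    have d0 : dd 0 a b = 1 := by simp [dd, poch_zero]
    rw [d0]
    simp only [Fin.val_zero, pow_zero, one_mul, mul_one]
    apply prod_congr rfl
    intro r _
    rw [dd_succ r a b hb]
    ring

/-- moments -/
def hh (n : ℕ) : ℚ := ((2 * n + 1).choose n : ℚ)

lemma hh_succ (n : ℕ) : hh (n + 1) = hh n * (2 * (2 * n + 3) / (n + 2)) := by
  unfold hh
  have e1 := Nat.choose_symm_half n
  have h1 := Nat.add_one_mul_choose_eq (2 * n + 2) n
  have h2 := Nat.choose_mul_succ_eq (2 * n + 1) n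
  have e : 2 * n + 1 + 1 - n = n + 2 := by omega
  rw [e] at h2
  rw [show 2 * (n + 1) + 1 = 2 * n + 2 + 1 by ring]
  have h1' : ((2 * n + 2 + 1 : ℕ) : ℚ) * ((2 * n + 2).choose n : ℚ) =
    ((2 * n + 2 + 1).choose (n+1) : ℚ) * ((n + 1 : ℕ) : ℚ) := by exact_mod_cast h1
  have h2' : ((2 * n + 1).choose n : ℚ) * ((2 * n + 1 + 1 : ℕ) : ℚ) =
    ((2 * n + 2).choose n : ℚ) * ((n + 2 : ℕ) : ℚ) := by exact_mod_cast h2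
  push_cast at h1' h2'
  have g1 : (n : ℚ) + 1 ≠ 0 := by positivity
  have g2 : (n : ℚ) + 2 ≠ 0 := by positivity
  field_simp
  apply mul_left_cancel₀ g1
  linear_combination (-(n+2 : ℚ)) * h1' - (2 * n + 3 : ℚ) * h2'

lemma hh_add (m n : ℕ) :
    hh (m + n) = hh m * (4 ^ n * (poch (m + 3/2) n / poch (m + 2) n)) := by
  induction n with
  | zero => simp [poch_zero]
  | succ n ih =>
    rw [← add_assoc, hh_succ, ih, poch_succ, poch_succ]
    have := (poch_pos ((m:ℚ)+2) (by positivity) n).ne'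
    push_cast
    field_simp
    ring

lemma poch_one (n : ℕ) : poch 1 n = n.factorial := by
  induction n with
  | zero => simp [poch_zero]
  | succ n ih => rw [poch_succ, ih, Nat.factorial_succ]; push_cast; ring

lemma poch_nat (r n : ℕ) : poch (r + 1) n * r.factorial = (r + n).factorial := by
  induction n with
  | zero => simp [poch_zero]
  | succ n ih =>
    rw [poch_succ, ← add_assoc, Nat.factorial_succ]; push_cast; rw [← ih]; ring

lemma poch_half (r : ℕ) : poch (1/2) r * (4 ^ r * r.factorial) = (2 * r).factorial := by
  induction r with
  | zero => simp [poch_zero]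
  | succ n ih =>
    rw [poch_succ, show 2 * (n + 1) = 2 * n + 1 + 1 by ring, Nat.factorial_succ,
      Nat.factorial_succ, Nat.factorial_succ]; push_cast; rw [← ih]; ring

lemma poch_three_half (r : ℕ) :
    poch (3/2) r * (4 ^ r * r.factorial) = (2 * r + 1).factorial := by
  induction r with
  | zero => simp [poch_zero]
  | succ n ih =>
    rw [poch_succ, show 2 * (n + 1) + 1 = 2 * n + 1 + 1 + 1 by ring, Nat.factorial_succ,
      Nat.factorial_succ (2 * n + 1 + 1), Nat.factorial_succ (2 * n + 1)]
    push_cast; rw [← ih]; ring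

lemma diag_base (r : ℕ) : 16 ^ r * dd r (3/2) 2 = 1 := by
  unfold dd
  have h1 := poch_half r
  have h2 := poch_three_half r
  have h3 : poch 2 (2 * r) = (2 * r + 1).factorial := by
    have := poch_nat 1 (2 * r)
    norm_num at this
    rw [this, add_comm]
  have h4 := poch_nat r r
  rw [← two_mul] at h4
  rw [show (2:ℚ) - 3/2 = 1/2 by norm_num, show (2:ℚ) + r - 1 = r + 1 by ring, h3, ← h2]
  have h5 : poch ((r:ℚ) + 1) r = poch (1/2) r * 4 ^ r := by
    have : (r.factorial : ℚ) ≠ 0 := by positivity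
    apply mul_right_cancel₀ this
    rw [h4, ← h1]; ring
  rw [h5, show (16:ℚ) = 4 * 4 by norm_num, mul_pow]
  have := (poch_pos (1/2) (by norm_num) r).ne'
  have := (poch_pos (3/2) (by norm_num) r).ne'
  field_simp

/-- a factor on the right-hand side -/
def RR (m j : ℕ) : ℚ := ∏ i ∈ Icc 1 m, ((2 * i + j : ℕ) : ℚ) / ((i + j : ℕ) : ℚ)

lemma RR_succ (m j : ℕ) :
    RR (m + 1) j = RR m j * ((2 * m + 2 + j : ℚ) / (m + 1 + j)) := by
  unfold RR
  rw [prod_Icc_succ_top (by omega)]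
  push_cast
  ring

lemma poch_shift (a : ℚ) (ha : 0 < a) (n : ℕ) : poch (a + 1) n = poch a n * (a + n) / a := by
  rw [eq_div_iff ha.ne', ← poch_succ, poch_succ', mul_comm]

lemma diag_eq (r m : ℕ) :
    hh m * (16 ^ r * dd r (m + 3/2) (m + 2)) = RR m (2 * r) * RR m (2 * r + 1) := by
  induction m with
  | zero =>
    have := diag_base r
    simp [RR, hh, this]
  | succ m ih =>
    rw [RR_succ, RR_succ, hh_succ]
    have key : dd r ((m + 1 : ℕ) + 3/2) ((m + 1 : ℕ) + 2) = dd r (m + 3/2) (m + 2) *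
        (((m + 3/2 + r) / (m + 3/2)) * ((m + 2) / (m + 2 + 2 * r))
          * ((m + 1 + r) / (m + 1 + 2 * r))) := by
      unfold dd
      push_cast
      rw [show (m:ℚ) + 1 + 3/2 = m + 3/2 + 1 by ring, show (m:ℚ) + 1 + 2 = m + 2 + 1 by ring,
        show (m:ℚ) + 2 + 1 - (m + 3/2 + 1) = m + 2 - (m + 3/2) by ring,
        show (m:ℚ) + 2 + 1 + r - 1 = m + 1 + r + 1 by ring,
        show (m:ℚ) + 2 + r - 1 = m + 1 + r by ring,
        poch_shift _ (by positivity), poch_shift (m + 2) (by positivity),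
        poch_shift (m + 1 + r) (by positivity)]
      have := (poch_pos ((m:ℚ) + 2) (by positivity) (2 * r)).ne'
      have := (poch_pos ((m:ℚ) + 1 + r) (by positivity) r).ne'
      push_cast
      rw [show (m:ℚ) + 1 + r + r = m + 1 + 2 * r by ring]
      field_simp
    rw [key]
    have : hh m * (2 * (2 * m + 3) / (m + 2)) * (16 ^ r * (dd r (m + 3/2) (m + 2) *
        (((m + 3/2 + r) / (m + 3/2)) * ((m + 2) / (m + 2 + 2 * r))
          * ((m + 1 + r) / (m + 1 + 2 * r))))) = hh m * (16 ^ r * dd r (m + 3/2) (m + 2)) *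
       ((2 * (2 * m + 3) / (m + 2)) * (((m + 3/2 + r) / (m + 3/2)) * ((m + 2) / (m + 2 + 2 * r))
          * ((m + 1 + r) / (m + 1 + 2 * r)))) := by ring
    rw [this, ih]
    push_cast
    have : (2 * (2 * m + 3) / (m + 2)) * (((m + 3/2 + r : ℚ) / (m + 3/2)) * ((m + 2) / (m + 2 + 2 * r))
          * ((m + 1 + r) / (m + 1 + 2 * r))) = ((2 * m + 2 + 2 * r) / (m + 1 + 2 * r)) *
          ((2 * m + 2 + (2 * r + 1)) / (m + 1 + (2 * r + 1))) := by
      rw [show (m:ℚ) + 1 + (2 * r + 1) = m + 2 + 2 * r by ring]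
      field_simp
      ring
    rw [this]
    ring

lemma hankel_hh (k m : ℕ) :
    Matrix.det (Matrix.of fun i j : Fin k => hh (m + (i + j))) =
      ∏ j ∈ range (2 * k), RR m j := by
  have hM : (Matrix.of fun i j : Fin k => hh (m + (i + j))) = Matrix.of fun i j : Fin k =>
      (hh m * 4 ^ (i : ℕ)) * (Matrix.of fun i j : Fin k => (4 : ℚ) ^ (j : ℕ) *
        (Matrix.of fun i j : Fin k =>
          poch (m + 3/2) (i + j) / poch (m + 2) (i + j)) i j) i j := by
    ext i j
    simp only [Matrix.of_apply]
    rw [hh_add, pow_add]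
    ring
  rw [hM, Matrix.det_mul_column (fun i : Fin k => hh m * 4 ^ (i : ℕ)),
    Matrix.det_mul_row (fun j : Fin k => (4 : ℚ) ^ (j : ℕ)),
    hankel k _ _ (by positivity),
    Fin.prod_univ_eq_prod_range (fun i => hh m * 4 ^ i),
    Fin.prod_univ_eq_prod_range (fun i => (4:ℚ) ^ i),
    ← prod_mul_distrib, ← prod_mul_distrib]
  have h2 : ∏ j ∈ range (2 * k), RR m j = ∏ r ∈ range k, (RR m (2 * r) * RR m (2 * r + 1)) := by
    clear hM
    induction k with
    | zero => simp
    | succ k ih =>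
      rw [show 2 * (k + 1) = 2 * k + 1 + 1 by ring, prod_range_succ, prod_range_succ, ih,
        prod_range_succ]
      ring
  rw [h2]
  apply prod_congr rfl
  intro r _
  rw [← diag_eq, show (16:ℚ) = 4 * 4 by norm_num, mul_pow]
  ring

/-- matrix entries -/
def EE (m : ℕ) (i j : ℤ) : ℚ :=
  binQ (2 * m) ((m : ℤ) - 1 - i - j) + binQ (2 * m) ((m : ℤ) - i + j)

lemma binQ_succ (N : ℕ) (r : ℤ) : binQ (N + 1) r = binQ N r + binQ N (r - 1) := by
  rcases lt_trichotomy r 0 with h | h | h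
  · have h1 : ¬ 0 ≤ r := by omega
    have h2 : ¬ 0 ≤ r - 1 := by omega
    simp only [binQ, if_neg h1, if_neg h2, add_zero]
  · subst h
    simp [binQ]
  · obtain ⟨n, rfl⟩ : ∃ n : ℕ, r = n + 1 := ⟨(r - 1).toNat, by omega⟩
    have h1 : (0:ℤ) ≤ n + 1 := by omega
    have e1 : ((n:ℤ) + 1).toNat = n + 1 := by omega
    simp only [binQ, if_pos h1, e1, add_sub_cancel_right, Int.toNat_natCast, Nat.cast_nonneg,
      if_true, Nat.choose_succ_succ]
    push_cast
    ring

lemma binQ_symm (N : ℕ) (r s : ℤ) (h : r + s = N) : binQ N r = binQ N s := by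
  unfold binQ
  split_ifs with h1 h2 h2
  · rw [Nat.choose_symm_of_eq_add (by omega : N = r.toNat + s.toNat)]
  · rw [Nat.choose_eq_zero_of_lt (by omega)]; simp
  · rw [Nat.choose_eq_zero_of_lt (by omega)]; simp
  · rfl

lemma binQ_succ2 (m : ℕ) (r : ℤ) : binQ (2 * (m + 1)) r =
    binQ (2 * m) r + 2 * binQ (2 * m) (r - 1) + binQ (2 * m) (r - 2) := by
  rw [show 2 * (m + 1) = 2 * m + 1 + 1 by ring, binQ_succ, binQ_succ, binQ_succ (2 * m) (r - 1),
    show r - 1 - 1 = r - 2 by ring]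
  ring

lemma EE_rec (m : ℕ) (i j : ℤ) :
    EE (m + 1) i j = EE m (i + 1) j + 2 * EE m i j + EE m (i - 1) j := by
  unfold EE
  rw [binQ_succ2, binQ_succ2]
  push_cast
  rw [show (m:ℤ) + 1 - 1 - i - j = m - 1 - (i - 1) - j by ring,
    show (m:ℤ) - 1 - (i - 1) - j - 1 = m - 1 - i - j by ring,
    show (m:ℤ) - 1 - (i - 1) - j - 2 = m - 1 - (i + 1) - j by ring,
    show (m:ℤ) + 1 - i + j = m - (i - 1) + j by ring,
    show (m:ℤ) - (i - 1) + j - 1 = m - i + j by ring,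
    show (m:ℤ) - (i - 1) + j - 2 = m - (i + 1) + j by ring]
  ring

lemma EE_refl (m : ℕ) (j : ℤ) : EE m (-1) j = EE m 0 j := by
  unfold EE
  rw [binQ_symm (2 * m) (m - 1 - -1 - j) (m - 0 + j) (by push_cast; ring),
    binQ_symm (2 * m) (m - -1 + j) (m - 1 - 0 - j) (by push_cast; ring), add_comm]

lemma EE_symm (m : ℕ) (i j : ℤ) : EE m i j = EE m j i := by
  unfold EE
  rw [binQ_symm (2 * m) (m - i + j) (m - j + i) (by push_cast; ring),
    show (m:ℤ) - 1 - i - j = m - 1 - j - i by ring]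

lemma EE_zero (m : ℕ) : EE m 0 0 = hh m := by
  unfold EE
  have := binQ_succ (2 * m) m
  simp only [sub_zero, add_zero]
  rw [add_comm, ← this]
  simp [binQ, hh]

lemma uniq (F G : ℕ → ℕ → ℚ)
    (hF0 : ∀ m, F (m + 1) 0 = F m 1 + 3 * F m 0)
    (hF : ∀ m i, F (m + 1) (i + 1) = F m (i + 2) + 2 * F m (i + 1) + F m i)
    (hG0 : ∀ m, G (m + 1) 0 = G m 1 + 3 * G m 0)
    (hG : ∀ m i, G (m + 1) (i + 1) = G m (i + 2) + 2 * G m (i + 1) + G m i)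
    (h : ∀ m, F m 0 = G m 0) (i : ℕ) : ∀ m, F m i = G m i := by
  induction i using Nat.strong_induction_on with
  | _ i ih =>
    intro m
    match i, ih with
    | 0, _ => exact h m
    | 1, _ =>
      linarith [hF0 m, hG0 m, h m, h (m + 1)]
    | i + 2, ih =>
      linarith [hF m i, hG m i, ih i (by omega) m, ih (i + 1) (by omega) m,
        ih (i + 1) (by omega) (m + 1)]

open Polynomial

/-- Chebyshev-type polynomials in `X = 2 + 2 cos θ` -/
noncomputable def pp : ℕ → ℚ[X]
  | 0 => 1
  | 1 => X - C 3
  | (n + 2) => (X - C 2) * pp (n + 1) - pp n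

/-- moment functional -/
noncomputable def LL : ℚ[X] →ₗ[ℚ] ℚ := Polynomial.lsum (fun n => hh n • LinearMap.id)

lemma LL_monomial (n : ℕ) (c : ℚ) : LL (monomial n c) = hh n * c := by
  simp [LL, Polynomial.lsum_apply, Polynomial.sum_monomial_index]

lemma LL_X (n : ℕ) : LL (X ^ n) = hh n := by
  rw [X_pow_eq_monomial, LL_monomial, mul_one]

lemma LL_rec0 (m : ℕ) (q : ℚ[X]) :
    LL (X ^ (m + 1) * pp 0 * q) = LL (X ^ m * pp 1 * q) + 3 * LL (X ^ m * pp 0 * q) := by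
  rw [← smul_eq_mul (3:ℚ), ← map_smul, ← map_add]
  congr 1
  rw [smul_eq_C_mul]
  simp only [pp]
  ring

lemma LL_rec (m i : ℕ) (q : ℚ[X]) :
    LL (X ^ (m + 1) * pp (i + 1) * q) = LL (X ^ m * pp (i + 2) * q)
      + 2 * LL (X ^ m * pp (i + 1) * q) + LL (X ^ m * pp i * q) := by
  rw [← smul_eq_mul (2:ℚ), ← map_smul, ← map_add, ← map_add]
  congr 1
  rw [smul_eq_C_mul, pp]
  ring

lemma EE_rec0 (m : ℕ) (j : ℤ) :
    EE (m + 1) ((0 : ℕ) : ℤ) j = EE m ((1 : ℕ) : ℤ) j + 3 * EE m ((0 : ℕ) : ℤ) j := by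
  have := EE_rec m 0 j
  rw [show (0:ℤ) - 1 = -1 by ring, EE_refl] at this
  push_cast
  rw [this, zero_add]
  ring

lemma EE_rec1 (m i : ℕ) (j : ℤ) :
    EE (m + 1) ((i + 1 : ℕ) : ℤ) j = EE m ((i + 2 : ℕ) : ℤ) j + 2 * EE m ((i + 1 : ℕ) : ℤ) j
      + EE m (i : ℤ) j := by
  have := EE_rec m ((i + 1 : ℕ) : ℤ) j
  rw [this]
  push_cast
  rw [show (i:ℤ) + 1 + 1 = i + 2 by ring, show (i:ℤ) + 1 - 1 = i by ring]

lemma EE_eq0 (m i : ℕ) : EE m i ((0 : ℕ) : ℤ) = LL (X ^ m * pp i * 1) := by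
  refine uniq (fun m i => EE m i ((0 : ℕ) : ℤ)) (fun m i => LL (X ^ m * pp i * 1)) ?_ ?_ ?_ ?_ ?_ i m
  · intro m; exact EE_rec0 m _
  · intro m i; exact EE_rec1 m i _
  · intro m; exact LL_rec0 m _
  · intro m i; exact LL_rec m i _
  · intro m
    have := EE_zero m
    simp [pp, LL_X, this]

lemma EE_eq (m i j : ℕ) : EE m i j = LL (X ^ m * pp i * pp j) := by
  refine uniq (fun m i => EE m i j) (fun m i => LL (X ^ m * pp i * pp j)) ?_ ?_ ?_ ?_ ?_ i m
  · intro m; exact EE_rec0 m _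
  · intro m i; exact EE_rec1 m i _
  · intro m; exact LL_rec0 m _
  · intro m i; exact LL_rec m i _
  · intro m
    rw [EE_symm, EE_eq0]
    simp [pp]

lemma pp_prop (n : ℕ) : (pp n).Monic ∧ (pp n).natDegree = n := by
  induction n using Nat.strong_induction_on with
  | _ n ih =>
    match n, ih with
    | 0, _ => simp [pp]
    | 1, _ => exact ⟨monic_X_sub_C _, natDegree_X_sub_C _⟩
    | n + 2, ih =>
      obtain ⟨m1, d1⟩ := ih (n + 1) (by omega)
      obtain ⟨m0, d0⟩ := ih n (by omega)
      have mm : ((X - C 2) * pp (n + 1)).Monic := (monic_X_sub_C _).mul m1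
      have md : ((X - C 2) * pp (n + 1)).natDegree = n + 2 := by
        rw [(monic_X_sub_C _).natDegree_mul m1, natDegree_X_sub_C, d1]; ring
      have hlt : (pp n).degree < ((X - C 2) * pp (n + 1)).degree := by
        rw [degree_eq_natDegree mm.ne_zero, degree_eq_natDegree m0.ne_zero, md, d0]
        exact_mod_cast (by omega : n < n + 2)
      rw [pp]
      refine ⟨mm.sub_of_left hlt, ?_⟩
      rw [natDegree_sub_eq_left_of_natDegree_lt (by omega), md]

lemma LL_expand (k m : ℕ) (i j : Fin k) : LL (X ^ m * pp i * pp j) =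
    ∑ l : Fin k, (∑ n : Fin k, (pp i).coeff n * hh (m + (n + l))) * (pp j).coeff l := by
  have hi := (pp (i:ℕ)).as_sum_range' k (by rw [(pp_prop i).2]; exact i.2)
  have hj := (pp (j:ℕ)).as_sum_range' k (by rw [(pp_prop j).2]; exact j.2)
  conv_lhs => rw [hi, hj]
  rw [← Fin.sum_univ_eq_sum_range (fun n => monomial n ((pp (i:ℕ)).coeff n)),
    ← Fin.sum_univ_eq_sum_range (fun n => monomial n ((pp (j:ℕ)).coeff n)),
    mul_sum, map_sum]
  apply sum_congr rfl
  intro l _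
  rw [mul_sum, sum_mul, map_sum, sum_mul]
  apply sum_congr rfl
  intro n _
  rw [X_pow_eq_monomial, monomial_mul_monomial, monomial_mul_monomial, LL_monomial, add_assoc]
  ring

lemma det_EE (k m : ℕ) : Matrix.det (Matrix.of fun i j : Fin k => EE m i j) =
    Matrix.det (Matrix.of fun i j : Fin k => hh (m + (i + j))) := by
  let T : Matrix (Fin k) (Fin k) ℚ := Matrix.of fun i n => (pp i).coeff n
  have hT : T.det = 1 := by
    rw [Matrix.det_of_lowerTriangular]
    · apply prod_eq_one
      intro i _
      have := (pp_prop i).1.coeff_natDegree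
      rw [(pp_prop i).2] at this
      exact this
    · intro i j hij
      have hij' : i < j := hij
      apply coeff_eq_zero_of_natDegree_lt
      rw [(pp_prop i).2]
      exact hij'
  have : (Matrix.of fun i j : Fin k => EE m i j) =
      T * (Matrix.of fun i j : Fin k => hh (m + (i + j))) * T.transpose := by
    ext i j
    simp only [Matrix.mul_apply, Matrix.of_apply, Matrix.transpose_apply, T]
    rw [EE_eq, LL_expand]
  rw [this, Matrix.det_mul, Matrix.det_mul, Matrix.det_transpose, hT]
  ring

end aux

/-- The determinant evaluation for Identity 2 in the even case `n = 2k`: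
`det( C(2m, m+1-i-j) + C(2m, m-i+j) )_{1≤i,j≤k}
  = ∏_{j=0}^{2k-1} ∏_{i=1}^{m} (2i+j)/(i+j)`
(with `0`-based `i, j` the upper entries read `C(2m, m-1-i-j) + C(2m, m-i+j)`). -/
theorem stmt_16 (k m : ℕ) (hk : 1 ≤ k) :
    Matrix.det (Matrix.of fun i j : Fin k =>
      binQ (2 * m) ((m : ℤ) - 1 - (i : ℤ) - (j : ℤ)) +
        binQ (2 * m) ((m : ℤ) - (i : ℤ) + (j : ℤ)))
    = ∏ j ∈ range (2 * k), ∏ i ∈ Icc 1 m, ((2 * i + j : ℕ) : ℚ) / ((i + j : ℕ) : ℚ) := by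
  exact (det_EE k m).trans (hankel_hh k m)
end
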